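/- arXiv:2404.14793 — 5 statements merged into one kernel-verified Lean document; each statement's English description precedes it below -/
import Mathlib

section
/- Let Ω ⊂ ℂⁿ be a bounded pseudoconvex domain and φ ∈ SPSH(Ω). For every compact subset K of Ω there exists a constant C_K such that for all k ≥ 1 and all z ∈ K, k^{−n} B_{kφ}(z) e^{−kφ(z)} ≤ C_K. -/
open MeasureTheory Complex Filter
open scoped ENNReal Topology BigOperators Real ComplexOrder

noncomputable section

variable {n : ℕ}

/-- Wirtinger derivative `∂f/∂z_j` of a function on `ℂⁿ`. -/
def wDeriv (f : (Fin n → ℂ) → ℂ) (j : Fin n) (z : Fin n → ℂ) : ℂ :=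
  (1/2) * (fderiv ℝ f z (Pi.single j 1) - Complex.I * fderiv ℝ f z (Pi.single j Complex.I))

/-- Wirtinger derivative `∂f/∂z̄_j` of a function on `ℂⁿ`. -/
def wDerivBar (f : (Fin n → ℂ) → ℂ) (j : Fin n) (z : Fin n → ℂ) : ℂ :=
  (1/2) * (fderiv ℝ f z (Pi.single j 1) + Complex.I * fderiv ℝ f z (Pi.single j Complex.I))

/-- Complex Hessian `H_φ(z) = (∂²φ/∂z_j∂z̄_k)_{j,k}` of a real-valued function on `ℂⁿ`. -/
def cHessian (φ : (Fin n → ℂ) → ℝ) (z : Fin n → ℂ) : Matrix (Fin n) (Fin n) ℂ :=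
  Matrix.of fun j k => wDerivBar (fun w => wDeriv (fun v => (φ v : ℂ)) j w) k z

/-- A function is plurisubharmonic on `Ω` if it is upper semicontinuous on `Ω` and satisfies
the sub-mean value inequality on every closed complex disc contained in `Ω`. -/
def PlurisubharmonicOn (Ω : Set (Fin n → ℂ)) (f : (Fin n → ℂ) → ℝ) : Prop :=
  UpperSemicontinuousOn f Ω ∧
  ∀ a b : Fin n → ℂ, (∀ ζ : ℂ, ‖ζ‖ ≤ 1 → a + ζ • b ∈ Ω) →
    f a ≤ (2 * π)⁻¹ * ∫ θ in (0:ℝ)..(2*π), f (a + Complex.exp (θ * Complex.I) • b)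

/-- A (bounded) open set `Ω ⊆ ℂⁿ` is pseudoconvex iff `z ↦ -log dist(z, Ωᶜ)` is
plurisubharmonic on `Ω`. -/
def Pseudoconvex (Ω : Set (Fin n → ℂ)) : Prop :=
  PlurisubharmonicOn Ω fun z => -Real.log (Metric.infDist z Ωᶜ)

/-- `φ ∈ SPSH(Ω)`: smooth on `Ω` with positive definite complex Hessian at every point of `Ω`. -/
def SPSHOn (Ω : Set (Fin n → ℂ)) (φ : (Fin n → ℂ) → ℝ) : Prop :=
  ContDiffOn ℝ (⊤ : ℕ∞) φ Ω ∧ ∀ z ∈ Ω, (cHessian φ z).PosDef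

/-- Squared weighted Bergman norm `∫_Ω |f|² e^{-ψ} dλ` (as an extended real,
so that finiteness encodes square-integrability). -/
def wnorm2 (Ω : Set (Fin n → ℂ)) (ψ : (Fin n → ℂ) → ℝ) (f : (Fin n → ℂ) → ℂ) : ℝ≥0∞ :=
  ∫⁻ z in Ω, ENNReal.ofReal (‖f z‖ ^ 2 * Real.exp (-ψ z))

/-- Membership in the weighted Bergman space `H(ψ)`: holomorphic on `Ω` and
`∫_Ω |f|² e^{-ψ} dλ < ∞`. -/
def MemBergman (Ω : Set (Fin n → ℂ)) (ψ : (Fin n → ℂ) → ℝ) (f : (Fin n → ℂ) → ℂ) : Prop :=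
  DifferentiableOn ℂ f Ω ∧ wnorm2 Ω ψ f < ⊤

/-- The diagonal of the Bergman kernel of `H(ψ)`:
`B_ψ(z) = sup {|f(z)|² : f ∈ H(ψ), ‖f‖_ψ ≤ 1}`. -/
def bergmanDiag (Ω : Set (Fin n → ℂ)) (ψ : (Fin n → ℂ) → ℝ) (z : Fin n → ℂ) : ℝ :=
  sSup {t : ℝ | ∃ f, DifferentiableOn ℂ f Ω ∧ wnorm2 Ω ψ f ≤ 1 ∧ t = ‖f z‖ ^ 2}

/-- Weighted inner product `⟨f,g⟩_ψ = ∫_Ω f ḡ e^{-ψ} dλ`. -/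
def wInner (Ω : Set (Fin n → ℂ)) (ψ : (Fin n → ℂ) → ℝ) (f g : (Fin n → ℂ) → ℂ) : ℂ :=
  ∫ z in Ω, f z * (starRingEnd ℂ) (g z) * Real.exp (-ψ z)

/-- Mixed determinants `D_j(A,B)`, defined so that
`det (s•A + r•B) = ∑_j (n choose j) s^j r^(n-j) D_j(A,B)`: explicitly `D_j(A,B)` is
`(n choose j)⁻¹` times the sum over all `j`-element subsets `S` of the row indices of the
determinant of the matrix whose rows are those of `A` on `S` and those of `B` elsewhere. -/
def mixedDet (A B : Matrix (Fin n) (Fin n) ℂ) (j : ℕ) : ℂ :=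
  ((n.choose j : ℂ))⁻¹ *
    ∑ S ∈ Finset.univ.powersetCard j,
      Matrix.det (Matrix.of fun i k => if i ∈ S then A i k else B i k)

lemma aux_rot (c : ℂ) (hc : ‖c‖ = 1) :
    MeasurePreserving (fun u : Fin n → ℂ => c • u) volume volume := by
  have h : MeasurePreserving (fun u : ℂ => c * u) volume volume := by
    have := (rotation ⟨c, by simpa [Submonoid.unitSphere] using hc⟩).measurePreserving
    exact this
  exact volume_preserving_pi (fun _ : Fin n => h)

lemma aux_mean (G : (Fin n → ℂ) → ℂ) (z : Fin n → ℂ) (r : ℝ)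
    (hG : DifferentiableOn ℂ G (Metric.ball z r)) (u : Fin n → ℂ) (hu : ‖u‖ < r) :
    ENNReal.ofReal (2 * π) * ‖G z‖ₑ ≤
      ∫⁻ θ in Set.Ioc (0:ℝ) (2 * π), ‖G (z + circleMap 0 1 θ • u)‖ₑ := by
  have hmaps : ∀ ζ : ℂ, ‖ζ‖ ≤ 1 → z + ζ • u ∈ Metric.ball z r := by
    intro ζ hζ
    simp only [Metric.mem_ball, dist_self_add_left, norm_smul]
    nlinarith [norm_nonneg u]
  have hd : ∀ ζ : ℂ, ‖ζ‖ ≤ 1 → DifferentiableAt ℂ (fun ζ : ℂ => G (z + ζ • u)) ζ := by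
    intro ζ hζ
    have h1 := (hG _ (hmaps ζ hζ)).differentiableAt (Metric.isOpen_ball.mem_nhds (hmaps ζ hζ))
    exact DifferentiableAt.comp (f := fun ζ : ℂ => z + ζ • u) ζ h1 (by fun_prop)
  have key : Real.circleAverage (fun ζ : ℂ => G (z + ζ • u)) 0 1 = G z := by
    rw [DiffContOnCl.circleAverage]
    · simp
    · apply DifferentiableOn.diffContOnCl
      rw [abs_one, closure_ball _ one_ne_zero]
      intro ζ hζ
      exact (hd ζ (by simpa using hζ)).differentiableWithinAt
  rw [Real.circleAverage_def, intervalIntegral.integral_of_le Real.two_pi_pos.le] at key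
  rw [← key]
  have h2 : ENNReal.ofReal (2 * π) * ‖(2 * π)⁻¹‖ₑ = 1 := by
    rw [Real.enorm_eq_ofReal (by positivity), ← ENNReal.ofReal_mul (by positivity),
      mul_inv_cancel₀ (by positivity)]
    simp
  rw [enorm_smul, ← mul_assoc, h2, one_mul]
  exact enorm_integral_le_lintegral_enorm _

lemma aux_submean (G : (Fin n → ℂ) → ℂ) (z : Fin n → ℂ) (r : ℝ)
    (hG : DifferentiableOn ℂ G (Metric.ball z r)) :
    volume (Metric.ball z r) * ‖G z‖ₑ ≤ ∫⁻ w in Metric.ball z r, ‖G w‖ₑ := by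
  set H : (Fin n → ℂ) → ℝ≥0∞ := (Metric.ball (0 : Fin n → ℂ) r).indicator
    (fun u => ‖G (z + u)‖ₑ) with hH
  have hHm : Measurable H := by
    have hc : ContinuousOn (fun u => ‖G (z + u)‖ₑ) (Metric.ball (0 : Fin n → ℂ) r) := by
      apply ContinuousOn.enorm
      refine hG.continuousOn.comp (by fun_prop) ?_
      intro u hu
      simpa using hu
    classical
    have := hc.measurable_piecewise (g := fun _ => (0:ℝ≥0∞)) continuousOn_const
      Metric.isOpen_ball.measurableSet
    rw [hH]
    convert this using 1
    rw [← Set.piecewise_eq_indicator]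
    rfl
  have hR : ∫⁻ w in Metric.ball z r, ‖G w‖ₑ = ∫⁻ u, H u := by
    rw [← lintegral_indicator Metric.isOpen_ball.measurableSet,
      ← lintegral_add_left_eq_self _ z]
    congr 1
    ext u
    simp only [hH, Set.indicator, Metric.mem_ball, dist_self_add_left, dist_zero_right]
  have h1 : ∀ u ∈ Metric.ball (0 : Fin n → ℂ) r, ENNReal.ofReal (2 * π) * ‖G z‖ₑ ≤
      ∫⁻ θ in Set.Ioc (0:ℝ) (2 * π), H (circleMap 0 1 θ • u) := by
    intro u hu
    have hu' : ‖u‖ < r := by simpa using hu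
    refine (aux_mean G z r hG u hu').trans (le_of_eq ?_)
    congr 1
    ext θ
    rw [hH, Set.indicator_of_mem]
    simpa [norm_smul] using hu'
  have h2 : ENNReal.ofReal (2 * π) * (volume (Metric.ball z r) * ‖G z‖ₑ) ≤
      ENNReal.ofReal (2 * π) * ∫⁻ u, H u := by
    calc ENNReal.ofReal (2 * π) * (volume (Metric.ball z r) * ‖G z‖ₑ)
        = ∫⁻ u in Metric.ball (0 : Fin n → ℂ) r, ENNReal.ofReal (2 * π) * ‖G z‖ₑ := by
          rw [lintegral_const, Measure.restrict_apply_univ,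
            Measure.addHaar_ball_center volume z r]
          ring
      _ ≤ ∫⁻ u in Metric.ball (0 : Fin n → ℂ) r,
            ∫⁻ θ in Set.Ioc (0:ℝ) (2 * π), H (circleMap 0 1 θ • u) :=
          setLIntegral_mono' Metric.isOpen_ball.measurableSet h1
      _ ≤ ∫⁻ u, ∫⁻ θ in Set.Ioc (0:ℝ) (2 * π), H (circleMap 0 1 θ • u) :=
          setLIntegral_le_lintegral _ _
      _ = ∫⁻ θ in Set.Ioc (0:ℝ) (2 * π), ∫⁻ u, H (circleMap 0 1 θ • u) := by
          rw [lintegral_lintegral_swap]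
          apply Measurable.aemeasurable
          apply hHm.comp
          have : Continuous (fun p : (Fin n → ℂ) × ℝ => circleMap 0 1 p.2 • p.1) := by
            have := continuous_circleMap 0 1
            fun_prop
          exact this.measurable
      _ = ∫⁻ θ in Set.Ioc (0:ℝ) (2 * π), ∫⁻ u, H u := by
          congr 1
          ext θ
          exact (aux_rot (circleMap 0 1 θ) (by simp)).lintegral_comp hHm
      _ = ENNReal.ofReal (2 * π) * ∫⁻ u, H u := by
          simp [mul_comm]
  rw [hR]
  exact (ENNReal.mul_le_mul_iff_right (by simp [Real.pi_pos]) ENNReal.ofReal_ne_top).1 h2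

lemma aux_taylor (Ω : Set (Fin n → ℂ)) (hΩo : IsOpen Ω)
    (φ : (Fin n → ℂ) → ℝ) (hφ : ContDiffOn ℝ (⊤ : ℕ∞) φ Ω)
    (K : Set (Fin n → ℂ)) (hK : IsCompact K) (hKΩ : K ⊆ Ω) :
    ∃ δ : ℝ, 0 < δ ∧ ∃ C : ℝ, ∀ z ∈ K, ∀ ρ : ℝ, 0 < ρ → ρ ≤ δ →
      Metric.ball z ρ ⊆ Ω ∧ ∀ w ∈ Metric.ball z ρ,
        φ w - φ z - fderiv ℝ φ z (w - z) ≤ C * ρ ^ 2 := by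
  obtain ⟨δ, hδ, hδΩ⟩ := hK.exists_cthickening_subset_open hΩo hKΩ
  have hφ1 : ContDiffOn ℝ 1 (fderiv ℝ φ) Ω := hφ.fderiv_of_isOpen hΩo (by norm_cast)
  have hφ2 : ContinuousOn (fderiv ℝ (fderiv ℝ φ)) Ω :=
    hφ1.continuousOn_fderiv_of_isOpen hΩo le_rfl
  obtain ⟨C, hC⟩ := (hK.cthickening (r := δ)).exists_bound_of_continuousOn
    (f := fderiv ℝ (fderiv ℝ φ)) (hφ2.mono hδΩ)
  refine ⟨δ, hδ, C, fun z hz ρ hρ hρδ => ?_⟩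
  have hsub : Metric.ball z ρ ⊆ Metric.cthickening δ K :=
    (Metric.ball_subset_closedBall.trans (Metric.closedBall_subset_closedBall hρδ)).trans
      (Metric.closedBall_subset_cthickening hz δ)
  have hzb : z ∈ Metric.ball z ρ := Metric.mem_ball_self hρ
  have hC0 : 0 ≤ C := (norm_nonneg _).trans (hC z (hsub hzb))
  refine ⟨hsub.trans hδΩ, fun w hw => ?_⟩
  have hb : ∀ x ∈ Metric.ball z ρ, ‖fderiv ℝ φ x - fderiv ℝ φ z‖ ≤ C * ρ := by
    intro x hx
    have h1 := (convex_ball z ρ).norm_image_sub_le_of_norm_fderiv_le (𝕜 := ℝ) (f := fderiv ℝ φ)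
      (C := C) (fun y hy => (hφ1.differentiableOn one_ne_zero).differentiableAt
        (hΩo.mem_nhds (hδΩ (hsub hy)))) (fun y hy => hC y (hsub hy)) hzb hx
    refine h1.trans ?_
    gcongr
    exact (mem_ball_iff_norm.1 hx).le
  have h2 := (convex_ball z ρ).norm_image_sub_le_of_norm_fderiv_le' (𝕜 := ℝ) (f := φ)
      (C := C * ρ) (φ := fderiv ℝ φ z) (fun y hy => (hφ.differentiableOn (by simp)).differentiableAt
        (hΩo.mem_nhds (hδΩ (hsub hy)))) hb hzb hw
  have h3 : C * ρ * ‖w - z‖ ≤ C * ρ * ρ := by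
    gcongr
    exact (mem_ball_iff_norm.1 hw).le
  have := (Real.le_norm_self _).trans (h2.trans h3)
  nlinarith

/-- For a bounded pseudoconvex domain `Ω ⊆ ℂⁿ` and `φ ∈ SPSH(Ω)`,
for every compact `K ⊆ Ω` there is a constant `C_K` with
`k^{-n} B_{kφ}(z) e^{-kφ(z)} ≤ C_K` for all `k ≥ 1` and all `z ∈ K`. -/
theorem bergman_kernel_uniform_upper_bound
    (Ω : Set (Fin n → ℂ)) (hΩo : IsOpen Ω) (hΩconn : IsConnected Ω)
    (hΩb : Bornology.IsBounded Ω) (hΩp : Pseudoconvex Ω)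
    (φ : (Fin n → ℂ) → ℝ) (hφ : SPSHOn Ω φ)
    (K : Set (Fin n → ℂ)) (hK : IsCompact K) (hKΩ : K ⊆ Ω) :
    ∃ C : ℝ, ∀ k : ℕ, 1 ≤ k → ∀ z ∈ K,
      ((k : ℝ) ^ n)⁻¹ * bergmanDiag Ω (fun w => k * φ w) z * Real.exp (-(k * φ z)) ≤ C := by
  obtain ⟨δ, hδ, C, hT⟩ := aux_taylor Ω hΩo φ hφ.1 K hK hKΩ
  set V : ℝ := (volume (Metric.ball (0 : Fin n → ℂ) 1)).toReal with hV
  have hVpos : 0 < V := ENNReal.toReal_pos (Metric.measure_ball_pos _ _ one_pos).ne'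
    measure_ball_lt_top.ne
  refine ⟨((δ ^ 2) ^ n * V)⁻¹ * Real.exp (C * δ ^ 2), fun k hk z hz => ?_⟩
  have hk0 : (0:ℝ) < k := by exact_mod_cast hk
  set ρ : ℝ := δ / √k with hρ
  have hsq : ρ ^ 2 = δ ^ 2 / k := by rw [hρ, div_pow, Real.sq_sqrt hk0.le]
  have hρ0 : 0 < ρ := by positivity
  have hρδ : ρ ≤ δ := by
    apply div_le_self hδ.le
    rw [Real.one_le_sqrt]
    exact_mod_cast hk
  obtain ⟨hball, hTw⟩ := hT z hz ρ hρ0 hρδ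
  set vol : ℝ := (ρ ^ 2) ^ n * V with hvol
  have hvolpos : 0 < vol := by positivity
  have hvolball : volume (Metric.ball z ρ) = ENNReal.ofReal vol := by
    rw [Measure.addHaar_ball_of_pos volume z hρ0, hvol, ENNReal.ofReal_mul (by positivity), hV,
      ENNReal.ofReal_toReal measure_ball_lt_top.ne]
    congr 2
    rw [← pow_mul]
    congr 1
    simp [Module.finrank_pi_fintype, mul_comm]
  have hmain : bergmanDiag Ω (fun w => k * φ w) z ≤
      vol⁻¹ * Real.exp (k * φ z + C * δ ^ 2) := by
    apply Real.sSup_le _ (by positivity)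
    rintro t ⟨f, hf, hfn, rfl⟩
    let ℓ : (Fin n → ℂ) →L[ℂ] ℂ := StrongDual.extendRCLike (𝕜 := ℂ) (fderiv ℝ φ z)
    have hℓ : ∀ x, (ℓ x).re = fderiv ℝ φ z x := fun x =>
      StrongDual.re_extendRCLike_apply (𝕜 := ℂ) (fderiv ℝ φ z) x
    let G : (Fin n → ℂ) → ℂ := fun w => f w ^ 2 * Complex.exp (-(k * ℓ (w - z)))
    have hGd : DifferentiableOn ℂ G (Metric.ball z ρ) := by
      have := hf.mono hball
      have h2 : Differentiable ℂ (fun w => Complex.exp (-(k * ℓ (w - z)))) := by fun_prop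
      exact (this.pow 2).mul h2.differentiableOn
    have hGn : ∀ w, ‖G w‖ = ‖f w‖ ^ 2 * Real.exp (-(k * fderiv ℝ φ z (w - z))) := by
      intro w
      simp only [G, norm_mul, norm_pow, Complex.norm_exp]
      congr 2
      rw [← hℓ]
      simp
    have h1 := aux_submean G z ρ hGd
    have h2 : ∫⁻ w in Metric.ball z ρ, ‖G w‖ₑ ≤ ENNReal.ofReal (Real.exp (k * φ z + C * δ ^ 2)) := by
      calc ∫⁻ w in Metric.ball z ρ, ‖G w‖ₑ
          ≤ ∫⁻ w in Metric.ball z ρ, ENNReal.ofReal (Real.exp (k * φ z + C * δ ^ 2)) *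
              ENNReal.ofReal (‖f w‖ ^ 2 * Real.exp (-(k * φ w))) := by
            apply setLIntegral_mono' Metric.isOpen_ball.measurableSet
            intro w hw
            rw [← ofReal_norm, ← ENNReal.ofReal_mul (by positivity), hGn]
            apply ENNReal.ofReal_le_ofReal
            rw [mul_left_comm, ← Real.exp_add]
            gcongr
            have h3 := mul_le_mul_of_nonneg_left (hTw w hw) hk0.le
            rw [hsq] at h3
            have h4 : (k:ℝ) * (C * (δ ^ 2 / k)) = C * δ ^ 2 := by field_simp
            rw [h4] at h3
            linarith
        _ = ENNReal.ofReal (Real.exp (k * φ z + C * δ ^ 2)) * ∫⁻ w in Metric.ball z ρ,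
              ENNReal.ofReal (‖f w‖ ^ 2 * Real.exp (-(k * φ w))) :=
            lintegral_const_mul' _ _ ENNReal.ofReal_ne_top
        _ ≤ ENNReal.ofReal (Real.exp (k * φ z + C * δ ^ 2)) * 1 := by
            gcongr
            exact (lintegral_mono_set hball).trans hfn
        _ = _ := mul_one _
    have h3 := h1.trans h2
    rw [hvolball, ← ofReal_norm, ← ENNReal.ofReal_mul hvolpos.le,
      ENNReal.ofReal_le_ofReal_iff (by positivity), hGn] at h3
    rw [le_inv_mul_iff₀ hvolpos]
    simpa using h3
  calc ((k : ℝ) ^ n)⁻¹ * bergmanDiag Ω (fun w => k * φ w) z * Real.exp (-(k * φ z))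
      ≤ ((k : ℝ) ^ n)⁻¹ * (vol⁻¹ * Real.exp (k * φ z + C * δ ^ 2)) * Real.exp (-(k * φ z)) := by
        gcongr
    _ = ((k : ℝ) ^ n)⁻¹ * vol⁻¹ * Real.exp (C * δ ^ 2) := by
        have : Real.exp (C * δ ^ 2) = Real.exp (k * φ z + C * δ ^ 2) * Real.exp (-(k * φ z)) := by
          rw [← Real.exp_add]; congr 1; ring
        rw [this]; ring
    _ = _ := by
        rw [← mul_inv, hvol, hsq, div_pow]
        congr 2
        field_simp
    _ ≤ _ := le_rfl
end
end

section
/- Let Ω ⊂ ℂⁿ be a bounded domain, φ : Ω → ℝ continuous, and let (e_j)_{j∈ℕ} be a Hilbert basis (complete orthonormal system) of the weighted Bergman space H(φ). Let g : Ω → ℝ be continuous with compact support in Ω. Then the series Σ_j ⟨P_φ(g·e_j), e_j⟩_φ converges absolutely and equals ∫_Ω (Σ_j |e_j(z)|²) g(z) e^{−φ(z)} dλ(z), which is finite; i.e., the trace of the Toeplitz operator T_{φ,g} on H(φ) equals ∫_Ω K_φ(z,z) g(z) e^{−φ(z)} dλ(z). -/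
open MeasureTheory Complex Filter
open scoped ENNReal Topology BigOperators Real ComplexOrder

noncomputable section

variable {n : ℕ}

theorem aux_smul_mp (c : ℂ) (hc : ‖c‖ = 1) :
    MeasurePreserving (fun b : Fin n → ℂ => c • b) volume volume := by
  have h1 : MeasurePreserving (fun x : ℂ => c * x) volume volume := by
    have := (rotation ⟨c, by simp [Submonoid.unitSphere, hc]⟩).measurePreserving
    exact this
  have := volume_preserving_pi (fun _ : Fin n => h1)
  exact this

theorem aux_mv (Ω : Set (Fin n → ℂ)) (F : (Fin n → ℂ) → ℂ) 
    (hF : DifferentiableOn ℂ F Ω) (a : Fin n → ℂ) (r : ℝ)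
    (hsub : Metric.closedBall a r ⊆ Ω) :
    ((volume.real (Metric.closedBall (0 : Fin n → ℂ) r) : ℝ) : ℂ) * F a
      = ∫ b in Metric.closedBall (0 : Fin n → ℂ) r, F (a + b) := by
  set B := Metric.closedBall (0 : Fin n → ℂ) r with hB
  have hmemΩ : ∀ ζ : ℂ, ‖ζ‖ ≤ 1 → ∀ b ∈ B, a + ζ • b ∈ Ω := by
    intro ζ hζ b hb
    apply hsub
    rw [hB, mem_closedBall_zero_iff] at hb
    rw [mem_closedBall_iff_norm, add_sub_cancel_left, norm_smul]
    calc ‖ζ‖ * ‖b‖ ≤ 1 * ‖b‖ := by gcongr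
      _ ≤ r := by simpa using hb
  have h1 : ∀ b ∈ B, F a = (2 * π)⁻¹ • ∫ θ in (0:ℝ)..(2*π), F (a + circleMap 0 1 θ • b) := by
    intro b hb
    have hd : DifferentiableOn ℂ (fun ζ : ℂ => F (a + ζ • b)) (Metric.closedBall 0 |1|) := by
      refine hF.comp (f := fun ζ : ℂ => a + ζ • b) (by fun_prop) ?_
      intro ζ hζ
      exact hmemΩ ζ (by simpa using hζ) b hb
    have := (hd.diffContOnCl_ball subset_rfl).circleAverage
    rw [Real.circleAverage_def] at this
    simpa using this.symm
  have hcont : ContinuousOn (Function.uncurry fun (θ : ℝ) (b : Fin n → ℂ) => F (a + circleMap 0 1 θ • b))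
      (Set.uIcc 0 (2*π) ×ˢ B) := by
    refine hF.continuousOn.comp (f := fun p : ℝ × (Fin n → ℂ) => a + circleMap 0 1 p.1 • p.2) ?_ ?_
    · have : Continuous fun p : ℝ × (Fin n → ℂ) => a + circleMap 0 1 p.1 • p.2 := by
        have := continuous_circleMap 0 1
        fun_prop
      exact this.continuousOn
    · rintro ⟨θ, b⟩ ⟨_, hb⟩
      exact hmemΩ _ (by simp) b hb
  have hint : Integrable (Function.uncurry fun (θ : ℝ) (b : Fin n → ℂ) => F (a + circleMap 0 1 θ • b))
      ((volume.restrict (Set.uIoc 0 (2*π))).prod (volume.restrict B)) := by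
    rw [Measure.prod_restrict]
    have hc : IsCompact (Set.uIcc (0:ℝ) (2*π) ×ˢ B) :=
      isCompact_uIcc.prod (isCompact_closedBall _ _)
    exact (hcont.integrableOn_compact hc).mono_set (Set.prod_mono Set.uIoc_subset_uIcc subset_rfl)
  have h2 : ∫ b in B, F a = ∫ b in B, (2 * π)⁻¹ • ∫ θ in (0:ℝ)..(2*π), F (a + circleMap 0 1 θ • b) :=
    setIntegral_congr_fun Metric.isClosed_closedBall.measurableSet h1
  rw [integral_smul, ← intervalIntegral_integral_swap hint] at h2
  have h3 : ∀ θ : ℝ, ∫ b in B, F (a + circleMap 0 1 θ • b) = ∫ b in B, F (a + b) := by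
    intro θ
    have hn : ‖circleMap 0 1 θ‖ = 1 := by simp
    have hne : circleMap 0 1 θ ≠ 0 := by intro h; simp [h] at hn
    have := (aux_smul_mp (n := n) _ hn).setIntegral_preimage_emb
      (Homeomorph.smulOfNeZero _ hne).measurableEmbedding (fun b => F (a + b)) B
    rw [← this]
    congr 2
    ext b
    simp [hB, norm_smul]
  simp only [h3] at h2
  rw [setIntegral_const] at h2
  simp only [intervalIntegral.integral_const, sub_zero, smul_smul] at h2
  rw [inv_mul_cancel₀ (by positivity), one_smul] at h2
  simpa using h2

theorem aux_bound (Ω : Set (Fin n → ℂ)) (hΩ : IsOpen Ω) (φ : (Fin n → ℂ) → ℝ)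
    (hφ : ContinuousOn φ Ω) (K : Set (Fin n → ℂ)) (hK : IsCompact K) (hKΩ : K ⊆ Ω) :
    ∃ C : ℝ, 0 ≤ C ∧ ∀ f : (Fin n → ℂ) → ℂ, DifferentiableOn ℂ f Ω →
      IntegrableOn (fun z => ‖f z‖ ^ 2 * Real.exp (-φ z)) Ω →
      ∀ a ∈ K, ‖f a‖ ^ 2 ≤ C * ∫ z in Ω, ‖f z‖ ^ 2 * Real.exp (-φ z) := by
  obtain ⟨r, hr, hrΩ⟩ := hK.exists_cthickening_subset_open hΩ hKΩ
  have hKr : IsCompact (Metric.cthickening r K) := hK.cthickening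
  obtain ⟨M, hM⟩ := hKr.exists_bound_of_continuousOn (hφ.mono hrΩ)
  set v := volume.real (Metric.closedBall (0 : Fin n → ℂ) r) with hv
  have hvpos : 0 < v := by
    rw [hv, Measure.real, ENNReal.toReal_pos_iff]
    exact ⟨Metric.measure_closedBall_pos _ _ hr, measure_closedBall_lt_top⟩
  refine ⟨v⁻¹ * Real.exp M, by positivity, ?_⟩
  intro f hf hfi a ha
  have hsub : Metric.closedBall a r ⊆ Metric.cthickening r K :=
    Metric.closedBall_subset_cthickening ha r
  have hmv := aux_mv Ω (fun z => f z ^ 2) (hf.pow 2) a r (hsub.trans hrΩ)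
  have htr := (measurePreserving_add_left (volume : Measure (Fin n → ℂ)) a).setIntegral_preimage_emb
      (measurableEmbedding_addLeft a) (fun b => ‖f b‖ ^ 2) (Metric.closedBall a r)
  have hpre : (fun x => a + x) ⁻¹' (Metric.closedBall a r) = Metric.closedBall 0 r := by
    ext b; simp
  rw [hpre] at htr
  have h1 : v * ‖f a‖ ^ 2 ≤ ∫ z in Metric.closedBall a r, ‖f z‖ ^ 2 := by
    rw [← htr]
    have := norm_integral_le_integral_norm (μ := volume.restrict (Metric.closedBall 0 r))
      (fun b => f (a + b) ^ 2)
    rw [← hmv] at this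
    simpa [← hv, abs_of_pos hvpos] using this
  have h2 : ∫ z in Metric.closedBall a r, ‖f z‖ ^ 2
      ≤ ∫ z in Metric.closedBall a r, Real.exp M * (‖f z‖ ^ 2 * Real.exp (-φ z)) := by
    refine setIntegral_mono_on ?_ ?_ Metric.isClosed_closedBall.measurableSet ?_
    · exact ContinuousOn.integrableOn_compact (isCompact_closedBall _ _)
        ((hf.continuousOn.mono (hsub.trans hrΩ)).norm.pow 2)
    · exact (hfi.mono_set (hsub.trans hrΩ)).const_mul _
    · intro z hz
      have := (abs_le.1 (hM z (hsub hz))).2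
      have h1 : 1 ≤ Real.exp M * Real.exp (-φ z) := by
        rw [← Real.exp_add]; exact Real.one_le_exp (by linarith)
      nlinarith [sq_nonneg ‖f z‖]
  rw [integral_const_mul] at h2
  have h3 : ∫ z in Metric.closedBall a r, ‖f z‖ ^ 2 * Real.exp (-φ z)
      ≤ ∫ z in Ω, ‖f z‖ ^ 2 * Real.exp (-φ z) :=
    setIntegral_mono_set hfi (Eventually.of_forall fun z => by positivity)
      (hsub.trans hrΩ).eventuallyLE
  have h4 : v * ‖f a‖ ^ 2 ≤ Real.exp M * ∫ z in Ω, ‖f z‖ ^ 2 * Real.exp (-φ z) :=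
    h1.trans (h2.trans (by gcongr))
  rw [mul_assoc, ← div_eq_inv_mul, le_div_iff₀' hvpos]
  exact h4

theorem aux_int (Ω : Set (Fin n → ℂ)) (hΩ : IsOpen Ω) (φ : (Fin n → ℂ) → ℝ)
    (hφ : ContinuousOn φ Ω) (f : (Fin n → ℂ) → ℂ) (hf : MemBergman Ω φ f) :
    IntegrableOn (fun z => ‖f z‖ ^ 2 * Real.exp (-φ z)) Ω := by
  refine ⟨?_, ?_⟩
  · exact ContinuousOn.aestronglyMeasurable ((hf.1.continuousOn.norm.pow 2).mul
      (Real.continuous_exp.comp_continuousOn hφ.neg)) hΩ.measurableSet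
  · rw [hasFiniteIntegral_iff_ofReal (Eventually.of_forall fun z => by positivity)]
    exact hf.2

theorem aux_int2 (Ω : Set (Fin n → ℂ)) (hΩ : IsOpen Ω) (φ : (Fin n → ℂ) → ℝ)
    (hφ : ContinuousOn φ Ω) (f g : (Fin n → ℂ) → ℂ) (hf : MemBergman Ω φ f)
    (hg : MemBergman Ω φ g) :
    IntegrableOn (fun z => f z * (starRingEnd ℂ) (g z) * Real.exp (-φ z)) Ω := by
  refine Integrable.mono' ((aux_int Ω hΩ φ hφ f hf).add (aux_int Ω hΩ φ hφ g hg)) ?_ ?_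
  · refine ContinuousOn.aestronglyMeasurable ?_ hΩ.measurableSet
    exact (hf.1.continuousOn.mul (continuous_conj.comp_continuousOn hg.1.continuousOn)).mul
      (continuous_ofReal.comp_continuousOn (Real.continuous_exp.comp_continuousOn hφ.neg))
  · refine Eventually.of_forall fun z => ?_
    simp only [norm_mul, RCLike.norm_conj, norm_real, Real.norm_eq_abs, Real.abs_exp, Pi.add_apply]
    rw [← add_mul]
    gcongr
    nlinarith [sq_nonneg (‖f z‖ - ‖g z‖), sq_nonneg (‖f z‖), sq_nonneg ‖g z‖]

theorem aux_kernel (Ω : Set (Fin n → ℂ)) (hΩo : IsOpen Ω)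
    (φ : (Fin n → ℂ) → ℝ) (hφ : ContinuousOn φ Ω)
    (e : ℕ → (Fin n → ℂ) → ℂ)
    (hmem : ∀ j, MemBergman Ω φ (e j))
    (horth : ∀ i j, wInner Ω φ (e i) (e j) = if i = j then 1 else 0)
    (K : Set (Fin n → ℂ)) (hK : IsCompact K) (hKΩ : K ⊆ Ω) :
    ∃ C : ℝ, 0 ≤ C ∧ ∀ a ∈ K, ∀ s : Finset ℕ, ∑ j ∈ s, ‖e j a‖ ^ 2 ≤ C := by
  obtain ⟨C, hC, hb⟩ := aux_bound Ω hΩo φ hφ K hK hKΩ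
  refine ⟨C, hC, ?_⟩
  intro a ha s
  set S := ∑ j ∈ s, ‖e j a‖ ^ 2 with hS
  let f : (Fin n → ℂ) → ℂ := fun z => ∑ j ∈ s, (starRingEnd ℂ) (e j a) * e j z
  have hfa : f a = S := by
    simp only [f, hS, ofReal_sum]
    refine Finset.sum_congr rfl fun j _ => ?_
    rw [mul_comm, mul_conj, normSq_eq_norm_sq]
  have hfd : DifferentiableOn ℂ f Ω :=
    DifferentiableOn.fun_sum fun j _ => (hmem j).1.const_mul _
  have hexp : ∀ z, ((‖f z‖ ^ 2 * Real.exp (-φ z) : ℝ) : ℂ) = ∑ i ∈ s, ∑ j ∈ s,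
      ((starRingEnd ℂ) (e i a) * e j a) *
        (e i z * (starRingEnd ℂ) (e j z) * Real.exp (-φ z)) := by
    intro z
    have : ((‖f z‖ ^ 2 : ℝ) : ℂ) = f z * (starRingEnd ℂ) (f z) := by
      rw [mul_conj, normSq_eq_norm_sq]
    rw [ofReal_mul, this]
    simp only [f, map_sum, map_mul, conj_conj]
    rw [Finset.sum_mul_sum, Finset.sum_mul]
    refine Finset.sum_congr rfl fun i _ => ?_
    rw [Finset.sum_mul]
    refine Finset.sum_congr rfl fun j _ => ?_
    ring
  have hij : ∀ i j, IntegrableOn (fun z => ((starRingEnd ℂ) (e i a) * e j a) *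
        (e i z * (starRingEnd ℂ) (e j z) * Real.exp (-φ z))) Ω := fun i j =>
    (aux_int2 Ω hΩo φ hφ _ _ (hmem i) (hmem j)).const_mul _
  have hint : IntegrableOn (fun z => ((‖f z‖ ^ 2 * Real.exp (-φ z) : ℝ) : ℂ)) Ω := by
    simp only [hexp]
    exact integrable_finsetSum _ fun i _ => integrable_finsetSum _ fun j _ => hij i j
  have hintR : IntegrableOn (fun z => ‖f z‖ ^ 2 * Real.exp (-φ z)) Ω := by
    have h := hint.re
    simp only [RCLike.re_to_complex, ofReal_re] at h
    exact h
  have hval : ∫ z in Ω, ‖f z‖ ^ 2 * Real.exp (-φ z) = S := by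
    have : ((∫ z in Ω, ‖f z‖ ^ 2 * Real.exp (-φ z) : ℝ) : ℂ) = S := by
      rw [← integral_complex_ofReal]
      simp only [hexp]
      rw [integral_finsetSum _ fun i _ => integrable_finsetSum _ fun j _ => hij i j]
      rw [hS, ofReal_sum]
      refine Finset.sum_congr rfl fun i hi => ?_
      rw [integral_finsetSum _ fun j _ => hij i j]
      have : ∀ j, ∫ z in Ω, ((starRingEnd ℂ) (e i a) * e j a) *
        (e i z * (starRingEnd ℂ) (e j z) * Real.exp (-φ z)) =
          ((starRingEnd ℂ) (e i a) * e j a) * (if i = j then 1 else 0) := by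
        intro j
        rw [integral_const_mul, ← horth i j]; rfl
      simp only [this]
      simp only [mul_ite, mul_one, mul_zero, Finset.sum_ite_eq, hi, if_true]
      rw [mul_comm, mul_conj, normSq_eq_norm_sq]
    exact_mod_cast this
  have := hb f hfd hintR a ha
  rw [hval, hfa] at this
  have hS0 : 0 ≤ S := Finset.sum_nonneg fun _ _ => by positivity
  rw [norm_real, Real.norm_eq_abs, abs_of_nonneg hS0] at this
  by_contra! h
  nlinarith

/-- Trace of a Toeplitz operator with compactly supported continuous symbol
`g` on a weighted Bergman space over a bounded domain: for a Hilbert basis `(e_j)` of `H(φ)`,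
the series `∑_j ⟨P_φ(g e_j), e_j⟩_φ` (whose `j`-th term equals `∫_Ω g |e_j|² e^{-φ} dλ`, by the
defining property of the orthogonal projection `P_φ` and `e_j ∈ H(φ)`) converges absolutely and
equals `∫_Ω (∑_j |e_j(z)|²) g(z) e^{-φ(z)} dλ(z) = ∫_Ω K_φ(z,z) g(z) e^{-φ(z)} dλ(z)`,
which is finite. -/
theorem toeplitz_trace_formula
    (Ω : Set (Fin n → ℂ)) (hΩo : IsOpen Ω) (hΩconn : IsConnected Ω)
    (hΩb : Bornology.IsBounded Ω)
    (φ : (Fin n → ℂ) → ℝ) (hφ : ContinuousOn φ Ω)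
    (e : ℕ → (Fin n → ℂ) → ℂ)
    (hmem : ∀ j, MemBergman Ω φ (e j))
    (horth : ∀ i j, wInner Ω φ (e i) (e j) = if i = j then 1 else 0)
    (hcomplete : ∀ f, MemBergman Ω φ f → (∀ j, wInner Ω φ f (e j) = 0) → ∀ z ∈ Ω, f z = 0)
    (g : (Fin n → ℂ) → ℝ) (hg : Continuous g) (hgc : HasCompactSupport g)
    (hgs : tsupport g ⊆ Ω) :
    Summable (fun j : ℕ => ∫ z in Ω, ‖e j z‖ ^ 2 * |g z| * Real.exp (-φ z)) ∧
    (∑' j : ℕ, ∫ z in Ω, ‖e j z‖ ^ 2 * g z * Real.exp (-φ z)) =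
      ∫ z in Ω, (∑' j : ℕ, ‖e j z‖ ^ 2) * g z * Real.exp (-φ z) ∧
    IntegrableOn (fun z => (∑' j : ℕ, ‖e j z‖ ^ 2) * g z * Real.exp (-φ z)) Ω := by
  obtain ⟨C, hC, hb⟩ := aux_kernel Ω hΩo φ hφ e hmem horth (tsupport g) hgc hgs
  have hg0 : ∀ z, z ∉ tsupport g → g z = 0 := fun z hz => image_eq_zero_of_notMem_tsupport hz
  have hexpc : ContinuousOn (fun z => Real.exp (-φ z)) Ω :=
    Real.continuous_exp.comp_continuousOn hφ.neg
  -- the dominating function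
  have hdom : IntegrableOn (fun z => C * |g z| * Real.exp (-φ z)) Ω := by
    apply Integrable.integrableOn
    rw [← integrableOn_iff_integrable_of_support_subset (s := tsupport g)]
    · exact ContinuousOn.integrableOn_compact hgc
          ((continuous_const.mul hg.abs).continuousOn.mul (hexpc.mono hgs))
    · intro z hz
      by_contra h
      exact hz (by simp [hg0 z h])
  have hsumm : ∀ z, Summable fun j => ‖e j z‖ ^ 2 * |g z| * Real.exp (-φ z) := by
    intro z
    by_cases hz : z ∈ tsupport g
    · exact ((summable_of_sum_le (fun j => by positivity) (hb z hz)).mul_right _).mul_right _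
    · simp [hg0 z hz, summable_zero]
  have hmeasA : ∀ j, AEStronglyMeasurable (fun z => ‖e j z‖ ^ 2 * |g z| * Real.exp (-φ z))
      (volume.restrict Ω) := fun j =>
    ContinuousOn.aestronglyMeasurable
      ((((hmem j).1.continuousOn.norm.pow 2).mul hg.abs.continuousOn).mul hexpc) hΩo.measurableSet
  have hmeas : ∀ j, AEStronglyMeasurable (fun z => ‖e j z‖ ^ 2 * g z * Real.exp (-φ z))
      (volume.restrict Ω) := fun j =>
    ContinuousOn.aestronglyMeasurable
      ((((hmem j).1.continuousOn.norm.pow 2).mul hg.continuousOn).mul hexpc) hΩo.measurableSet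
  have hS : ∀ z ∈ tsupport g, Summable fun j => ‖e j z‖ ^ 2 := fun z hz =>
    summable_of_sum_le (fun j => by positivity) (hb z hz)
  have hsum2 : ∀ z, HasSum (fun j => ‖e j z‖ ^ 2 * g z * Real.exp (-φ z))
      ((∑' j : ℕ, ‖e j z‖ ^ 2) * g z * Real.exp (-φ z)) := by
    intro z
    by_cases hz : z ∈ tsupport g
    · exact ((hS z hz).hasSum.mul_right _).mul_right _
    · simp [hg0 z hz, hasSum_zero]
  have hsum3 : ∀ z, HasSum (fun j => ‖e j z‖ ^ 2 * |g z| * Real.exp (-φ z))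
      ((∑' j : ℕ, ‖e j z‖ ^ 2) * |g z| * Real.exp (-φ z)) := by
    intro z
    by_cases hz : z ∈ tsupport g
    · exact ((hS z hz).hasSum.mul_right _).mul_right _
    · simp [hg0 z hz, hasSum_zero]
  have hle : ∀ z, (∑' j : ℕ, ‖e j z‖ ^ 2) * |g z| * Real.exp (-φ z)
      ≤ C * |g z| * Real.exp (-φ z) := by
    intro z
    by_cases hz : z ∈ tsupport g
    · have := (hS z hz).tsum_le_of_sum_le (hb z hz)
      gcongr
    · simp [hg0 z hz]
  have hpos : ∀ z, 0 ≤ ∑' j : ℕ, ‖e j z‖ ^ 2 := fun z => tsum_nonneg fun j => by positivity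
  have hI : IntegrableOn (fun z => (∑' j : ℕ, ‖e j z‖ ^ 2) * g z * Real.exp (-φ z)) Ω := by
    refine Integrable.mono' hdom ?_ (Eventually.of_forall fun z => ?_)
    · refine aestronglyMeasurable_of_tendsto_ae atTop
        (f := fun (s : Finset ℕ) z => ∑ j ∈ s, ‖e j z‖ ^ 2 * g z * Real.exp (-φ z)) ?_
        (Eventually.of_forall fun z => hsum2 z)
      intro s
      exact Finset.aestronglyMeasurable_fun_sum _ fun j _ => hmeas j
    · rw [norm_mul, norm_mul, Real.norm_eq_abs, Real.norm_eq_abs, Real.norm_eq_abs, Real.abs_exp,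
        abs_of_nonneg (hpos z)]
      exact hle z
  have hIA : IntegrableOn (fun z => ∑' j, ‖e j z‖ ^ 2 * |g z| * Real.exp (-φ z)) Ω := by
    have := hI.norm
    refine this.congr (Eventually.of_forall fun z => ?_)
    simp only [(hsum3 z).tsum_eq]
    rw [norm_mul, norm_mul, Real.norm_eq_abs, Real.norm_eq_abs, Real.norm_eq_abs, Real.abs_exp,
        abs_of_nonneg (hpos z)]
  refine ⟨?_, ?_, hI⟩
  · exact (hasSum_integral_of_dominated_convergence
      (fun j z => ‖e j z‖ ^ 2 * |g z| * Real.exp (-φ z)) hmeasA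
      (fun j => Eventually.of_forall fun z => by
        rw [Real.norm_eq_abs, abs_of_nonneg (by positivity)])
      (Eventually.of_forall hsumm) hIA (Eventually.of_forall hsum3)).summable
  · exact (hasSum_integral_of_dominated_convergence
      (fun j z => ‖e j z‖ ^ 2 * |g z| * Real.exp (-φ z)) hmeas
      (fun j => Eventually.of_forall fun z => by
        rw [norm_mul, norm_mul, Real.norm_eq_abs, Real.norm_eq_abs, Real.norm_eq_abs, Real.abs_exp,
          abs_of_nonneg (sq_nonneg _)])
      (Eventually.of_forall hsumm) hIA (Eventually.of_forall hsum2)).tsum_eq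
end
end

section
/- Let Ω ⊂ ℂⁿ be a bounded domain, φ : Ω → ℝ continuous, u, v : Ω → ℝ continuous with compact support in Ω, so that H(φ) = H(φ+u) as sets. Then for every f ∈ H(φ): T_{φ,e^{−u}}( T_{φ+u,v} f ) = P_φ(v·e^{−u}·f), i.e. P_φ( e^{−u} · P_{φ+u}(v f) ) = P_φ( v e^{−u} f ); equivalently, on H(φ) the operator T_{φ,e^{−u}}^{−1} ∘ T_{φ, v e^{−u}} coincides with the Toeplitz operator T_{φ+u, v} with symbol v on H(φ+u). -/
open MeasureTheory Complex Filter
open scoped ENNReal Topology BigOperators Real ComplexOrder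

noncomputable section

variable {n : ℕ}

lemma memB_iff (Ω : Set (Fin n → ℂ)) (hΩo : IsOpen Ω) (ψ : (Fin n → ℂ) → ℝ)
    (hψ : ContinuousOn ψ Ω) (f : (Fin n → ℂ) → ℂ) (hf : DifferentiableOn ℂ f Ω) :
    MemBergman Ω ψ f ↔ IntegrableOn (fun z => ‖f z‖ ^ 2 * Real.exp (-ψ z)) Ω := by
  have hm : AEStronglyMeasurable (fun z => ‖f z‖ ^ 2 * Real.exp (-ψ z)) (volume.restrict Ω) := by
    apply ContinuousOn.aestronglyMeasurable _ hΩo.measurableSet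
    exact (hf.continuousOn.norm.pow 2).mul (Real.continuous_exp.comp_continuousOn hψ.neg)
  unfold MemBergman wnorm2 IntegrableOn Integrable
  rw [hasFiniteIntegral_iff_ofReal (Eventually.of_forall fun z => by positivity)]
  tauto

lemma memB_of_le (Ω : Set (Fin n → ℂ)) (hΩo : IsOpen Ω) (ψ ψ' : (Fin n → ℂ) → ℝ)
    (hψ : ContinuousOn ψ Ω) (hψ' : ContinuousOn ψ' Ω) (f : (Fin n → ℂ) → ℂ) (M : ℝ)
    (hM : ∀ z, ψ z - M ≤ ψ' z) (hf : MemBergman Ω ψ f) : MemBergman Ω ψ' f := by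
  rw [memB_iff Ω hΩo ψ' hψ' f hf.1]
  have h := ((memB_iff Ω hΩo ψ hψ f hf.1).1 hf).const_mul (Real.exp M)
  refine Integrable.mono' h ?_ (Eventually.of_forall fun z => ?_)
  · apply ContinuousOn.aestronglyMeasurable _ hΩo.measurableSet
    exact (hf.1.continuousOn.norm.pow 2).mul (Real.continuous_exp.comp_continuousOn hψ'.neg)
  · rw [Real.norm_of_nonneg (by positivity)]
    have : Real.exp (-ψ' z) ≤ Real.exp M * Real.exp (-ψ z) := by
      rw [← Real.exp_add]
      exact Real.exp_le_exp.2 (by linarith [hM z])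
    nlinarith [mul_le_mul_of_nonneg_left this (sq_nonneg ‖f z‖)]

lemma memB_sub (Ω : Set (Fin n → ℂ)) (hΩo : IsOpen Ω) (ψ : (Fin n → ℂ) → ℝ)
    (hψ : ContinuousOn ψ Ω) (f g : (Fin n → ℂ) → ℂ)
    (hf : MemBergman Ω ψ f) (hg : MemBergman Ω ψ g) :
    MemBergman Ω ψ (fun z => f z - g z) := by
  have hd : DifferentiableOn ℂ (fun z => f z - g z) Ω := hf.1.sub hg.1
  rw [memB_iff Ω hΩo ψ hψ _ hd]
  have h := (((memB_iff Ω hΩo ψ hψ f hf.1).1 hf).add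
    ((memB_iff Ω hΩo ψ hψ g hg.1).1 hg)).const_mul 2
  refine Integrable.mono' h ?_ (Eventually.of_forall fun z => ?_)
  · apply ContinuousOn.aestronglyMeasurable _ hΩo.measurableSet
    exact (hd.continuousOn.norm.pow 2).mul (Real.continuous_exp.comp_continuousOn hψ.neg)
  · rw [Real.norm_of_nonneg (by positivity)]
    have h1 : ‖f z - g z‖ ^ 2 ≤ 2 * (‖f z‖ ^ 2 + ‖g z‖ ^ 2) := by
      have := norm_sub_le (f z) (g z)
      nlinarith [sq_nonneg (‖f z‖ - ‖g z‖), norm_nonneg (f z - g z)]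
    have := mul_le_mul_of_nonneg_right h1 (Real.exp_pos (-ψ z)).le
    simp only [Pi.add_apply]
    linarith

lemma memB_int (Ω : Set (Fin n → ℂ)) (hΩo : IsOpen Ω) (ψ : (Fin n → ℂ) → ℝ)
    (hψ : ContinuousOn ψ Ω) (f g : (Fin n → ℂ) → ℂ)
    (hf : MemBergman Ω ψ f) (hg : MemBergman Ω ψ g) (b : (Fin n → ℂ) → ℝ)
    (hb : Continuous b) (C : ℝ) (hC : ∀ z, |b z| ≤ C) :
    IntegrableOn (fun z => (b z : ℂ) * (f z * (starRingEnd ℂ) (g z) * Real.exp (-ψ z))) Ω := by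
  have h := (((memB_iff Ω hΩo ψ hψ f hf.1).1 hf).add
    ((memB_iff Ω hΩo ψ hψ g hg.1).1 hg)).const_mul C
  refine Integrable.mono' h ?_ (Eventually.of_forall fun z => ?_)
  · apply ContinuousOn.aestronglyMeasurable _ hΩo.measurableSet
    exact (Complex.continuous_ofReal.comp hb).continuousOn.mul
      ((hf.1.continuousOn.mul (Complex.continuous_conj.comp_continuousOn hg.1.continuousOn)).mul
      (Complex.continuous_ofReal.comp_continuousOn (Real.continuous_exp.comp_continuousOn hψ.neg)))
  · simp only [norm_mul, Complex.norm_real, RCLike.norm_conj, Pi.add_apply, Real.norm_eq_abs,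
      Real.abs_exp]
    have h1 : ‖f z‖ * ‖g z‖ ≤ ‖f z‖ ^ 2 + ‖g z‖ ^ 2 := by
      nlinarith [sq_nonneg (‖f z‖ - ‖g z‖), sq_nonneg ‖f z‖, sq_nonneg ‖g z‖]
    rw [← add_mul]
    have hC0 : 0 ≤ C := (abs_nonneg _).trans (hC z)
    have := hC z
    gcongr

/-- For `f ∈ H(φ)`: `T_{φ,e^{-u}}(T_{φ+u,v} f) = P_φ(v e^{-u} f)`, i.e.
`P_φ(e^{-u} P_{φ+u}(v f)) = P_φ(v e^{-u} f)`.  Here `g₁ = P_{φ+u}(v f)`, `g₂ = P_φ(e^{-u} g₁)`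
and `g₃ = P_φ(v e^{-u} f)` are encoded by the defining property of the orthogonal projections
(membership plus orthogonality of the difference), and the conclusion is `g₂ = g₃` on `Ω`. -/
theorem toeplitz_composition_identity
    (Ω : Set (Fin n → ℂ)) (hΩo : IsOpen Ω) (hΩconn : IsConnected Ω)
    (hΩb : Bornology.IsBounded Ω)
    (φ : (Fin n → ℂ) → ℝ) (hφ : ContinuousOn φ Ω)
    (u v : (Fin n → ℂ) → ℝ)
    (hu : Continuous u) (huc : HasCompactSupport u) (hus : tsupport u ⊆ Ω)
    (hv : Continuous v) (hvc : HasCompactSupport v) (hvs : tsupport v ⊆ Ω)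
    (f g₁ g₂ g₃ : (Fin n → ℂ) → ℂ)
    (hf : MemBergman Ω φ f)
    (hg₁ : MemBergman Ω (fun z => φ z + u z) g₁)
    (hg₁proj : ∀ h, MemBergman Ω (fun z => φ z + u z) h →
      ∫ z in Ω, (v z * f z - g₁ z) * (starRingEnd ℂ) (h z) *
        Real.exp (-(φ z + u z)) = 0)
    (hg₂ : MemBergman Ω φ g₂)
    (hg₂proj : ∀ h, MemBergman Ω φ h →
      ∫ z in Ω, (Real.exp (-u z) * g₁ z - g₂ z) * (starRingEnd ℂ) (h z) *
        Real.exp (-φ z) = 0)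
    (hg₃ : MemBergman Ω φ g₃)
    (hg₃proj : ∀ h, MemBergman Ω φ h →
      ∫ z in Ω, (v z * Real.exp (-u z) * f z - g₃ z) * (starRingEnd ℂ) (h z) *
        Real.exp (-φ z) = 0) :
    ∀ z ∈ Ω, g₂ z = g₃ z := by
  obtain ⟨M, hM⟩ := huc.exists_bound_of_continuous hu
  obtain ⟨N, hN⟩ := hvc.exists_bound_of_continuous hv
  simp only [Real.norm_eq_abs] at hM hN
  have hφu : ContinuousOn (fun z => φ z + u z) Ω := hφ.add hu.continuousOn
  have hh : MemBergman Ω φ (fun z => g₂ z - g₃ z) := memB_sub Ω hΩo φ hφ g₂ g₃ hg₂ hg₃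
  have hh' : MemBergman Ω (fun z => φ z + u z) (fun z => g₂ z - g₃ z) :=
    memB_of_le Ω hΩo φ _ hφ hφu _ M (fun z => by linarith [neg_le_of_abs_le (hM z)]) hh
  have hg₁' : MemBergman Ω φ g₁ :=
    memB_of_le Ω hΩo _ φ hφu hφ _ M (fun z => by linarith [le_of_abs_le (hM z)]) hg₁
  have hE : ∀ z, |Real.exp (-u z)| ≤ Real.exp M := fun z => by
    rw [Real.abs_exp]
    exact Real.exp_le_exp.2 (by linarith [neg_le_of_abs_le (hM z)])
  have hEc : Continuous fun z => Real.exp (-u z) := Real.continuous_exp.comp hu.neg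
  have hVE : ∀ z, |v z * Real.exp (-u z)| ≤ N * Real.exp M := fun z => by
    rw [abs_mul]
    exact mul_le_mul (hN z) (hE z) (abs_nonneg _) ((abs_nonneg _).trans (hN z))
  have i1 := memB_int Ω hΩo φ hφ f _ hf hh (fun z => v z * Real.exp (-u z)) (hv.mul hEc) _ hVE
  have i2 := memB_int Ω hΩo φ hφ g₁ _ hg₁' hh (fun z => Real.exp (-u z)) hEc _ hE
  have i3 := memB_int Ω hΩo φ hφ g₂ _ hg₂ hh (fun _ => 1) continuous_const 1 (by simp)
  have i4 := memB_int Ω hΩo φ hφ g₃ _ hg₃ hh (fun _ => 1) continuous_const 1 (by simp)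
  have e1 := hg₁proj _ hh'
  have e2 := hg₂proj _ hh
  have e3 := hg₃proj _ hh
  have e1' := (integral_sub i1 i2).symm.trans (Eq.trans (integral_congr_ae
    (Eventually.of_forall fun z => by
      simp only [neg_add, Real.exp_add]; push_cast; ring)) e1)
  have e2' := (integral_sub i2 i3).symm.trans (Eq.trans (integral_congr_ae
    (Eventually.of_forall fun z => by push_cast; ring)) e2)
  have e3' := (integral_sub i1 i4).symm.trans (Eq.trans (integral_congr_ae
    (Eventually.of_forall fun z => by push_cast; ring)) e3)
  have e4 : ∫ z in Ω, ((‖g₂ z - g₃ z‖ ^ 2 * Real.exp (-φ z) : ℝ) : ℂ) = 0 := by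
    have := integral_sub i3 i4
    have e5 : _ = (0 : ℂ) := this.trans (by linear_combination e3' - e1' - e2')
    rw [← e5]
    refine integral_congr_ae (Eventually.of_forall fun z => ?_)
    have := Complex.mul_conj' (g₂ z - g₃ z)
    push_cast
    rw [← this]
    ring
  rw [integral_complex_ofReal, Complex.ofReal_eq_zero,
    integral_eq_zero_iff_of_nonneg (fun z => by positivity)
      ((memB_iff Ω hΩo φ hφ _ hh.1).1 hh)] at e4
  have e6 : Set.EqOn (fun z => g₂ z - g₃ z) (fun _ => 0) Ω := by
    refine Measure.eqOn_open_of_ae_eq (μ := volume) ?_ hΩo hh.1.continuousOn continuousOn_const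
    filter_upwards [e4] with z hz
    simpa [Real.exp_ne_zero] using hz
  intro z hz
  exact sub_eq_zero.1 (e6 hz)
end
end

section
/- Let Ω ⊂ ℂⁿ be a bounded pseudoconvex domain, φ ∈ SPSH(Ω) and u a φ-admissible test function. Define e : [0,1] → ℝ by e(t) := (π^{−n}/(n+1)) Σ_{j=0}^n ∫_Ω t·u(z)·D_j(H_{φ+tu}(z), H_φ(z)) dλ(z) (the Monge–Ampère energy E(φ+tu)). Then e is differentiable on [0,1] and e'(t) = π^{−n} ∫_Ω u(z) det H_{φ+tu}(z) dλ(z) for every t ∈ [0,1], i.e. the energy functional is a primitive of the normalized Monge–Ampère operator (1/n!)(dd^c(φ+tu))^n. -/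
open MeasureTheory Complex Filter
open scoped ENNReal Topology BigOperators Real ComplexOrder

noncomputable section

variable {n : ℕ}

/-- Rows of `U` on `S`, rows of `A` elsewhere. -/
def rowMix (A U : Matrix (Fin n) (Fin n) ℂ) (S : Finset (Fin n)) : ℂ :=
  Matrix.det (Matrix.of fun i k => if i ∈ S then U i k else A i k)

lemma det_add_rows (A U : Matrix (Fin n) (Fin n) ℂ) (c : Fin n → ℂ) :
    Matrix.det (Matrix.of fun i k => A i k + c i * U i k) =
      ∑ S : Finset (Fin n), (∏ i ∈ S, c i) * rowMix A U S := by
  have h := (Matrix.detRowAlternating (R := ℂ) (n := Fin n)).map_add_univ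
    (fun i => c i • U i) (fun i => A i)
  have e : (Matrix.of fun i k => A i k + c i * U i k) =
      ((fun i => c i • U i) + (fun i => A i) : Fin n → Fin n → ℂ) := by
    ext i k
    simp [add_comm]
  rw [e]
  refine h.trans (Finset.sum_congr rfl fun S _ => ?_)
  have h2 := (Matrix.detRowAlternating (R := ℂ) (n := Fin n)).map_piecewise_smul c
    (S.piecewise (fun i => U i) (fun i => A i)) S
  have e1 : S.piecewise (fun i => c i • U i) (fun i => A i) =
      S.piecewise (fun i => c i • (S.piecewise (fun i => U i) (fun i => A i)) i)
        (S.piecewise (fun i => U i) (fun i => A i)) := by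
    ext i k
    by_cases hi : i ∈ S <;> simp [Finset.piecewise, hi]
  rw [e1]
  refine h2.trans ?_
  rw [smul_eq_mul]
  congr 1
  unfold rowMix
  change Matrix.det _ = _
  congr 1
  ext i k
  by_cases hi : i ∈ S <;> simp [Finset.piecewise, hi]

/-- Weights. -/
def wgt (n j k : ℕ) : ℝ := ((n.choose j : ℝ))⁻¹ * (if k ≤ j then ((n - k).choose (j - k) : ℝ) else 0)

lemma card_sup (S : Finset (Fin n)) (j : ℕ) :
    ((Finset.univ.powersetCard j).filter (fun T : Finset (Fin n) => S ⊆ T)).card =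
      if S.card ≤ j then (n - S.card).choose (j - S.card) else 0 := by
  split_ifs with h
  · simpa using Finset.card_filter_powersetCard_subset S Finset.univ j (Finset.subset_univ S) h
  · rw [Finset.card_eq_zero, Finset.filter_eq_empty_iff]
    intro T hT hS
    have := Finset.card_le_card hS
    simp at hT
    omega

lemma mixedDet_expand (A U : Matrix (Fin n) (Fin n) ℂ) (s : ℝ) (j : ℕ) :
    mixedDet (A + (s : ℂ) • U) A j =
      ∑ S : Finset (Fin n), ((wgt n j S.card * s ^ S.card : ℝ) : ℂ) * rowMix A U S := by
  unfold mixedDet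
  have h : ∀ T : Finset (Fin n),
      Matrix.det (Matrix.of fun i k => if i ∈ T then (A + (s : ℂ) • U) i k else A i k) =
      ∑ S : Finset (Fin n), (if S ⊆ T then (s : ℂ) ^ S.card else 0) * rowMix A U S := by
    intro T
    have e : (Matrix.of fun i k => if i ∈ T then (A + (s : ℂ) • U) i k else A i k) =
        Matrix.of fun i k => A i k + (if i ∈ T then (s : ℂ) else 0) * U i k := by
      ext i k
      by_cases hi : i ∈ T <;> simp [hi]
    rw [e, det_add_rows]
    refine Finset.sum_congr rfl fun S _ => ?_
    congr 1
    split_ifs with hS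
    · rw [Finset.prod_congr rfl (fun i hi => if_pos (hS hi)), Finset.prod_const]
    · obtain ⟨i, hi, hiT⟩ := Finset.not_subset.mp hS
      exact Finset.prod_eq_zero hi (if_neg hiT)
  simp_rw [h]
  rw [Finset.sum_comm, Finset.mul_sum]
  refine Finset.sum_congr rfl fun S _ => ?_
  rw [← Finset.sum_mul, ← Finset.sum_filter, Finset.sum_const, card_sup, wgt, nsmul_eq_mul]
  split_ifs <;> push_cast <;> ring

lemma sum_wgt {k : ℕ} (hk : k ≤ n) :
    ∑ j ∈ Finset.range (n + 1), wgt n j k = (n + 1 : ℝ) / (k + 1) := by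
  have hc : (n.choose k : ℝ) ≠ 0 := by exact_mod_cast (Nat.choose_pos hk).ne'
  have h : ∀ j ∈ Finset.range (n + 1), wgt n j k = (n.choose k : ℝ)⁻¹ * (j.choose k : ℝ) := by
    intro j hj
    have hj' : j ≤ n := by simpa [Nat.lt_succ_iff] using hj
    have hcj : (n.choose j : ℝ) ≠ 0 := by exact_mod_cast (Nat.choose_pos hj').ne'
    unfold wgt
    split_ifs with hkj
    · have := Nat.choose_mul (n := n) hkj
      have : (n.choose j : ℝ) * j.choose k = n.choose k * (n - k).choose (j - k) := by
        exact_mod_cast this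
      field_simp
      linarith
    · rw [Nat.choose_eq_zero_of_lt (n := j) (k := k) (by omega)]
      simp
  rw [Finset.sum_congr rfl h, ← Finset.mul_sum]
  have h2 : ∑ j ∈ Finset.range (n + 1), (j.choose k : ℝ) = ((n + 1).choose (k + 1) : ℝ) := by
    rw [← Nat.sum_Icc_choose]
    push_cast
    symm
    apply Finset.sum_subset
    · intro x hx
      simp at hx ⊢
      omega
    · intro x hx hx2
      simp at hx hx2
      rw [Nat.choose_eq_zero_of_lt (by omega)]
      simp
  rw [h2]
  have h3 : ((n + 1 : ℕ) : ℝ) * n.choose k = (n + 1).choose (k + 1) * ((k + 1 : ℕ) : ℝ) := by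
    exact_mod_cast Nat.add_one_mul_choose_eq n k
  push_cast at h3
  field_simp
  linarith

lemma contDiffOn_fderiv_apply {Ω : Set (Fin n → ℂ)} (hΩ : IsOpen Ω) {f : (Fin n → ℂ) → ℂ}
    (hf : ContDiffOn ℝ (⊤ : ℕ∞) f Ω) (v : Fin n → ℂ) :
    ContDiffOn ℝ (⊤ : ℕ∞) (fun z => fderiv ℝ f z v) Ω :=
  (hf.fderiv_of_isOpen hΩ (by simp)).clm_apply contDiffOn_const

lemma contDiffOn_wDeriv {Ω : Set (Fin n → ℂ)} (hΩ : IsOpen Ω) {f : (Fin n → ℂ) → ℂ}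
    (hf : ContDiffOn ℝ (⊤ : ℕ∞) f Ω) (j : Fin n) :
    ContDiffOn ℝ (⊤ : ℕ∞) (wDeriv f j) Ω := by
  unfold wDeriv
  exact contDiffOn_const.mul ((contDiffOn_fderiv_apply hΩ hf _).sub
    (contDiffOn_const.mul (contDiffOn_fderiv_apply hΩ hf _)))

lemma contDiffOn_wDerivBar {Ω : Set (Fin n → ℂ)} (hΩ : IsOpen Ω) {f : (Fin n → ℂ) → ℂ}
    (hf : ContDiffOn ℝ (⊤ : ℕ∞) f Ω) (j : Fin n) :
    ContDiffOn ℝ (⊤ : ℕ∞) (wDerivBar f j) Ω := by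
  unfold wDerivBar
  exact contDiffOn_const.mul ((contDiffOn_fderiv_apply hΩ hf _).add
    (contDiffOn_const.mul (contDiffOn_fderiv_apply hΩ hf _)))

lemma contDiffOn_coe {Ω : Set (Fin n → ℂ)} {φ : (Fin n → ℂ) → ℝ}
    (hf : ContDiffOn ℝ (⊤ : ℕ∞) φ Ω) : ContDiffOn ℝ (⊤ : ℕ∞) (fun z => (φ z : ℂ)) Ω :=
  Complex.ofRealCLM.contDiff.comp_contDiffOn hf

lemma continuousOn_cHessian {Ω : Set (Fin n → ℂ)} (hΩ : IsOpen Ω) {φ : (Fin n → ℂ) → ℝ}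
    (hf : ContDiffOn ℝ (⊤ : ℕ∞) φ Ω) : ContinuousOn (cHessian φ) Ω := by
  refine continuousOn_pi.2 fun j => continuousOn_pi.2 fun k => ?_
  exact (contDiffOn_wDerivBar hΩ (contDiffOn_wDeriv hΩ (contDiffOn_coe hf) j) k).continuousOn

lemma fderiv_add_mul {f g : (Fin n → ℂ) → ℂ} {z : Fin n → ℂ} (hf : DifferentiableAt ℝ f z)
    (hg : DifferentiableAt ℝ g z) (s : ℂ) (v : Fin n → ℂ) :
    fderiv ℝ (fun w => f w + s * g w) z v = fderiv ℝ f z v + s * fderiv ℝ g z v := by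
  have := (hf.hasFDerivAt.add (hg.hasFDerivAt.const_mul s)).fderiv
  have e : (fun w => f w + s * g w) = f + fun y => s * g y := rfl
  rw [e, this]
  simp

lemma cHessian_add {Ω : Set (Fin n → ℂ)} (hΩ : IsOpen Ω) {φ u : (Fin n → ℂ) → ℝ}
    (hf : ContDiffOn ℝ (⊤ : ℕ∞) φ Ω) (hu : ContDiffOn ℝ (⊤ : ℕ∞) u Ω) (s : ℝ)
    {z : Fin n → ℂ} (hz : z ∈ Ω) :
    cHessian (fun w => φ w + s * u w) z = cHessian φ z + (s : ℂ) • cHessian u z := by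
  have D : ∀ {f : (Fin n → ℂ) → ℂ}, ContDiffOn ℝ (⊤ : ℕ∞) f Ω → ∀ w ∈ Ω,
      DifferentiableAt ℝ f w := fun h w hw =>
    (h.differentiableOn (by simp)).differentiableAt (hΩ.mem_nhds hw)
  ext j k
  have h1 : ∀ w ∈ Ω, wDeriv (fun v => ((φ v + s * u v : ℝ) : ℂ)) j w =
      wDeriv (fun v => (φ v : ℂ)) j w + s * wDeriv (fun v => (u v : ℂ)) j w := by
    intro w hw
    push_cast
    unfold wDeriv
    rw [fderiv_add_mul (D (contDiffOn_coe hf) w hw) (D (contDiffOn_coe hu) w hw),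
      fderiv_add_mul (D (contDiffOn_coe hf) w hw) (D (contDiffOn_coe hu) w hw)]
    ring
  have h2 : (fun w => wDeriv (fun v => ((φ v + s * u v : ℝ) : ℂ)) j w) =ᶠ[𝓝 z]
      fun w => wDeriv (fun v => (φ v : ℂ)) j w + s * wDeriv (fun v => (u v : ℂ)) j w := by
    filter_upwards [hΩ.mem_nhds hz] with w hw using h1 w hw
  have d1 := D (contDiffOn_wDeriv hΩ (contDiffOn_coe hf) j) z hz
  have d2 := D (contDiffOn_wDeriv hΩ (contDiffOn_coe hu) j) z hz
  simp only [cHessian, Matrix.of_apply, Matrix.add_apply, Matrix.smul_apply, smul_eq_mul]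
  unfold wDerivBar
  rw [h2.fderiv_eq, fderiv_add_mul d1 d2, fderiv_add_mul d1 d2]
  ring

lemma continuousOn_rowMix {Ω : Set (Fin n → ℂ)} {A U : (Fin n → ℂ) → Matrix (Fin n) (Fin n) ℂ}
    (hA : ContinuousOn A Ω) (hU : ContinuousOn U Ω) (S : Finset (Fin n)) :
    ContinuousOn (fun z => rowMix (A z) (U z) S) Ω := by
  unfold rowMix
  refine (Continuous.matrix_det continuous_id).comp_continuousOn ?_
  refine continuousOn_pi.2 fun j => continuousOn_pi.2 fun k => ?_
  by_cases h : j ∈ S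
  · simpa [h] using (continuousOn_pi.1 (continuousOn_pi.1 hU j) k)
  · simpa [h] using (continuousOn_pi.1 (continuousOn_pi.1 hA j) k)

/-- The Monge–Ampère energy `e(t) = E(φ + t u)` (written via mixed
determinants of complex Hessians) is differentiable on `[0,1]` with
`e'(t) = π^{-n} ∫_Ω u det H_{φ+tu} dλ`, i.e. the energy is a primitive of the normalized
Monge–Ampère operator `(1/n!)(dd^c(φ+tu))^n`. -/
theorem energy_derivative
    (Ω : Set (Fin n → ℂ)) (hΩo : IsOpen Ω) (hΩconn : IsConnected Ω)
    (hΩb : Bornology.IsBounded Ω) (hΩp : Pseudoconvex Ω)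
    (φ : (Fin n → ℂ) → ℝ) (hφ : SPSHOn Ω φ)
    (u : (Fin n → ℂ) → ℝ) (hu : ContDiff ℝ (⊤ : ℕ∞) u) (huc : HasCompactSupport u)
    (hus : tsupport u ⊆ Ω) (hadm : SPSHOn Ω (fun z => φ z + u z)) :
    ∀ t ∈ Set.Icc (0:ℝ) 1,
      HasDerivWithinAt
        (fun s : ℝ => (((π : ℝ) ^ n)⁻¹ / (n + 1)) * ∑ j ∈ Finset.range (n + 1),
          ∫ z in Ω, s * u z *
            (mixedDet (cHessian (fun w => φ w + s * u w) z) (cHessian φ z) j).re)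
        (((π : ℝ) ^ n)⁻¹ * ∫ z in Ω, u z * (cHessian (fun w => φ w + t * u w) z).det.re)
        (Set.Icc (0:ℝ) 1) t := by
  intro t _
  have hφc := hφ.1
  have huo : ContDiffOn ℝ (⊤ : ℕ∞) u Ω := hu.contDiffOn
  set q : Finset (Fin n) → (Fin n → ℂ) → ℝ :=
    fun S z => u z * (rowMix (cHessian φ z) (cHessian u z) S).re with hq
  have hint : ∀ S, IntegrableOn (q S) Ω := by
    intro S
    have hc : ContinuousOn (q S) Ω := huo.continuousOn.mul
      (Complex.continuous_re.comp_continuousOn (continuousOn_rowMix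
        (continuousOn_cHessian hΩo hφc) (continuousOn_cHessian hΩo huo) S))
    have hK : IntegrableOn (q S) (tsupport u) :=
      (hc.mono hus).integrableOn_compact huc
    refine hK.of_forall_sdiff_eq_zero hΩo.measurableSet fun z hz => ?_
    simp [hq, image_eq_zero_of_notMem_tsupport hz.2]
  have hterm : ∀ (s : ℝ) (j : ℕ), ∫ z in Ω, s * u z *
      (mixedDet (cHessian (fun w => φ w + s * u w) z) (cHessian φ z) j).re =
      ∑ S : Finset (Fin n), (wgt n j S.card * s ^ (S.card + 1)) * ∫ z in Ω, q S z := by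
    intro s j
    have : ∀ z ∈ Ω, s * u z *
        (mixedDet (cHessian (fun w => φ w + s * u w) z) (cHessian φ z) j).re =
        ∑ S : Finset (Fin n), (wgt n j S.card * s ^ (S.card + 1)) * q S z := by
      intro z hz
      rw [cHessian_add hΩo hφc huo s hz, mixedDet_expand, Complex.re_sum, Finset.mul_sum]
      refine Finset.sum_congr rfl fun S _ => ?_
      rw [Complex.re_ofReal_mul, hq]
      ring
    rw [setIntegral_congr_fun hΩo.measurableSet this,
      integral_finsetSum _ fun S _ => (hint S).const_mul _]
    simp_rw [integral_const_mul]
  have hdet : ∫ z in Ω, u z * (cHessian (fun w => φ w + t * u w) z).det.re =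
      ∑ S : Finset (Fin n), t ^ S.card * ∫ z in Ω, q S z := by
    have : ∀ z ∈ Ω, u z * (cHessian (fun w => φ w + t * u w) z).det.re =
        ∑ S : Finset (Fin n), t ^ S.card * q S z := by
      intro z hz
      have hd := det_add_rows (cHessian φ z) (cHessian u z) (fun _ => (t : ℂ))
      have e : (Matrix.of fun i k => cHessian φ z i k + (t : ℂ) * cHessian u z i k) =
          cHessian φ z + (t : ℂ) • cHessian u z := by
        ext i k
        simp
      rw [e] at hd
      rw [cHessian_add hΩo hφc huo t hz, hd, Complex.re_sum, Finset.mul_sum]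
      refine Finset.sum_congr rfl fun S _ => ?_
      rw [Finset.prod_const, ← Complex.ofReal_pow, Complex.re_ofReal_mul, hq]
      ring
    rw [setIntegral_congr_fun hΩo.measurableSet this,
      integral_finsetSum _ fun S _ => (hint S).const_mul _]
    simp_rw [integral_const_mul]
  have hfun : (fun s : ℝ => (((π : ℝ) ^ n)⁻¹ / (n + 1)) * ∑ j ∈ Finset.range (n + 1),
          ∫ z in Ω, s * u z *
            (mixedDet (cHessian (fun w => φ w + s * u w) z) (cHessian φ z) j).re) =
      fun s : ℝ => ((π : ℝ) ^ n)⁻¹ * ∑ S : Finset (Fin n),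
        s ^ (S.card + 1) / (S.card + 1) * ∫ z in Ω, q S z := by
    funext s
    simp_rw [hterm]
    rw [Finset.sum_comm, Finset.mul_sum, Finset.mul_sum]
    refine Finset.sum_congr rfl fun S _ => ?_
    rw [← Finset.sum_mul, ← Finset.sum_mul, sum_wgt (by simpa using Finset.card_le_univ S)]
    have : (n + 1 : ℝ) ≠ 0 := by positivity
    have : (S.card + 1 : ℝ) ≠ 0 := by positivity
    field_simp
  rw [hfun, hdet]
  refine HasDerivAt.hasDerivWithinAt (HasDerivAt.const_mul _ (HasDerivAt.fun_sum fun S _ => ?_))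
  refine HasDerivAt.mul_const ?_ _
  have h := (hasDerivAt_pow (S.card + 1) t).div_const (S.card + 1 : ℝ)
  have : (S.card + 1 : ℝ) ≠ 0 := by positivity
  convert h using 1
  push_cast
  field_simp
end
end

section
/- Let Ω ⊂ ℂⁿ be a bounded pseudoconvex domain, φ ∈ SPSH(Ω), u a φ-admissible test function, and k ∈ ℕ. For t ∈ [0,1] let K_{k,t} : Ω×Ω → ℂ be the reproducing kernel of H(k(φ+tu)), and set S_k(t) := Σ_{m=0}^∞ (1/m!) ∫_{Ω^m} det[K_{k,0}(z_i,z_j)]_{1≤i,j≤m} ∏_{l=1}^m (e^{−k t u(z_l)} − 1) e^{−kφ(z_l)} dλ(z_1)⋯dλ(z_m). Then S_k(t) > 0 for all t ∈ [0,1], the function t ↦ log S_k(t) is differentiable, and (d/dt) log S_k(t) = −k ∫_Ω K_{k,t}(w,w) u(w) e^{−k(φ(w)+t u(w))} dλ(w). -/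
open MeasureTheory Complex Filter
open scoped ENNReal Topology BigOperators Real ComplexOrder

noncomputable section

variable {n : ℕ}

lemma sum_fun_det {d : ℕ} (A : Matrix (Fin d) (Fin d) ℂ) (m : ℕ) :
    ∑ κ : Fin m → Fin d, (A.submatrix κ κ).det =
      (m.factorial : ℂ) * ∑ s ∈ (Finset.univ : Finset (Fin d)).powersetCard m,
        (A.submatrix (Subtype.val : s → Fin d) (Subtype.val : s → Fin d)).det := by
  classical
  have h1 : ∑ κ : Fin m → Fin d, (A.submatrix κ κ).det =
      ∑ κ ∈ (Finset.univ : Finset (Fin m → Fin d)).filter Function.Injective,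
        (A.submatrix κ κ).det := by
    symm
    apply Finset.sum_subset (Finset.filter_subset _ _)
    intro κ _ hκ
    simp only [Finset.mem_filter, Finset.mem_univ, true_and] at hκ
    simp only [Function.Injective, not_forall] at hκ
    obtain ⟨i, j, hij, hne⟩ := hκ
    apply Matrix.det_zero_of_row_eq hne
    ext l
    simp [Matrix.submatrix_apply, hij]
  rw [h1, Finset.mul_sum]
  rw [← Finset.sum_fiberwise_of_maps_to (s := (Finset.univ : Finset (Fin m → Fin d)).filter Function.Injective)
    (t := (Finset.univ : Finset (Fin d)).powersetCard m) (g := fun κ => Finset.univ.image κ)]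
  · apply Finset.sum_congr rfl
    intro s hs
    have hcard : s.card = m := (Finset.mem_powersetCard.1 hs).2
    have key : ∀ κ ∈ ((Finset.univ : Finset (Fin m → Fin d)).filter Function.Injective).filter
        (fun κ => Finset.univ.image κ = s), (A.submatrix κ κ).det =
        (A.submatrix (Subtype.val : s → Fin d) (Subtype.val : s → Fin d)).det := by
      intro κ hκ
      simp only [Finset.mem_filter, Finset.mem_univ, true_and] at hκ
      obtain ⟨hinj, him⟩ := hκ
      have hmem : ∀ i, κ i ∈ s := fun i => by rw [← him]; exact Finset.mem_image_of_mem _ (Finset.mem_univ i)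
      let e : Fin m ≃ s := Equiv.ofBijective (fun i => ⟨κ i, hmem i⟩) (by
        constructor
        · intro i j hij
          exact hinj (Subtype.ext_iff.1 hij)
        · rintro ⟨x, hx⟩
          rw [← him] at hx
          obtain ⟨i, _, hi⟩ := Finset.mem_image.1 hx
          exact ⟨i, Subtype.ext hi⟩)
      rw [← Matrix.det_submatrix_equiv_self e]
      rfl
    rw [Finset.sum_congr rfl key, Finset.sum_const, nsmul_eq_mul]
    congr 2
    have : (((Finset.univ : Finset (Fin m → Fin d)).filter Function.Injective).filter
        (fun κ => Finset.univ.image κ = s)).card = (Finset.univ : Finset (Fin m ≃ s)).card := by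
      symm
      refine Finset.card_bij' (fun e _ => fun i => (e i : Fin d)) (fun κ hκ => ?_) ?_ ?_ ?_ ?_
      · simp only [Finset.mem_filter, Finset.mem_univ, true_and] at hκ
        exact Equiv.ofBijective (fun i => ⟨κ i, by rw [← hκ.2]; exact Finset.mem_image_of_mem _ (Finset.mem_univ i)⟩) (by
          constructor
          · intro i j hij
            exact hκ.1 (Subtype.ext_iff.1 hij)
          · rintro ⟨x, hx⟩
            rw [← hκ.2] at hx
            obtain ⟨i, _, hi⟩ := Finset.mem_image.1 hx
            exact ⟨i, Subtype.ext hi⟩)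
      · intro e _
        simp only [Finset.mem_filter, Finset.mem_univ, true_and]
        refine ⟨fun i j hij => e.injective (Subtype.ext hij), ?_⟩
        ext x
        simp only [Finset.mem_image, Finset.mem_univ, true_and]
        constructor
        · rintro ⟨i, rfl⟩; exact (e i).2
        · intro hx; exact ⟨e.symm ⟨x, hx⟩, by simp⟩
      · intro _ _; exact Finset.mem_univ _
      · intro e _; ext i; rfl
      · intro κ hκ; rfl
    rw [this, Finset.card_univ, Fintype.card_equiv (Fintype.equivOfCardEq (by simp [hcard])), Fintype.card_fin]
  · intro κ hκ
    simp only [Finset.mem_filter, Finset.mem_univ, true_and] at hκ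
    rw [Finset.mem_powersetCard]
    refine ⟨Finset.subset_univ _, ?_⟩
    rw [Finset.card_image_of_injective _ hκ]; simp

lemma tsum_minors {d : ℕ} (A : Matrix (Fin d) (Fin d) ℂ) :
    ∑' m : ℕ, ((m.factorial : ℝ))⁻¹ • ∑ κ : Fin m → Fin d, (A.submatrix κ κ).det = (1 + A).det := by
  classical
  have h : ∀ m : ℕ, ((m.factorial : ℝ))⁻¹ • ∑ κ : Fin m → Fin d, (A.submatrix κ κ).det
      = (Matrix.det (1 + (Polynomial.X : Polynomial ℂ) • A.map Polynomial.C)).coeff m := by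
    intro m
    rw [sum_fun_det, Matrix.coeff_det_one_add_X_smul_eq_sum_minors, Complex.real_smul, ← mul_assoc]
    push_cast
    rw [inv_mul_cancel₀ (by exact_mod_cast m.factorial_ne_zero), one_mul]
  simp_rw [h]
  set p := Matrix.det (1 + (Polynomial.X : Polynomial ℂ) • A.map Polynomial.C) with hp
  have h2 : p.eval 1 = (1 + A).det := by
    rw [hp, ← Polynomial.coe_evalRingHom, RingHom.map_det]
    congr 1
    ext i j
    by_cases hij : i = j <;> simp [hij]
  rw [← h2, Polynomial.eval_eq_sum_range, tsum_eq_sum (s := Finset.range (p.natDegree + 1))]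
  · simp
  · intro m hm
    apply Polynomial.coeff_eq_zero_of_natDegree_lt
    simpa using hm

lemma andreief {α : Type*} [MeasurableSpace α] (ν : Measure α) [SigmaFinite ν] {d : ℕ}
    (p q : Fin d → α → ℂ) (a : α → ℂ)
    (hint : ∀ i j, Integrable (fun z => q i z * p j z * a z) ν) (m : ℕ) :
    Integrable (fun z => Matrix.det (Matrix.of fun i j : Fin m => ∑ k, p k (z i) * q k (z j)) *
      ∏ l : Fin m, a (z l)) (Measure.pi fun _ : Fin m => ν) ∧
    ∫ z, Matrix.det (Matrix.of fun i j : Fin m => ∑ k, p k (z i) * q k (z j)) *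
      ∏ l : Fin m, a (z l) ∂(Measure.pi fun _ : Fin m => ν) =
    ∑ κ : Fin m → Fin d, ((Matrix.of fun i j => ∫ z, q i z * p j z * a z ∂ν).submatrix κ κ).det := by
  have h : ∀ z : Fin m → α, Matrix.det (Matrix.of fun i j : Fin m => ∑ k, p k (z i) * q k (z j)) *
      ∏ l : Fin m, a (z l) = ∑ κ : Fin m → Fin d, ∑ σ : Equiv.Perm (Fin m),
        ((Equiv.Perm.sign σ : ℤ) : ℂ) * ∏ i, (q (κ i) (z i) * p (κ (σ⁻¹ i)) (z i) * a (z i)) := by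
    intro z
    rw [Matrix.det_apply', Finset.sum_comm, Finset.sum_mul]
    apply Finset.sum_congr rfl
    intro σ _
    simp only [Matrix.of_apply]
    rw [Finset.prod_univ_sum, mul_assoc, Finset.sum_mul, Finset.mul_sum]
    apply Finset.sum_congr (by ext; simp)
    intro κ _
    congr 1
    simp only [Finset.prod_mul_distrib]
    rw [mul_comm (∏ x, q (κ x) (z x))]
    congr 2
    rw [← Equiv.prod_comp σ (fun x => p (κ (σ⁻¹ x)) (z x))]
    simp
  simp_rw [h]
  have hI : ∀ (κ : Fin m → Fin d) (σ : Equiv.Perm (Fin m)), Integrable (fun z : Fin m → α =>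
      ((Equiv.Perm.sign σ : ℤ) : ℂ) * ∏ i, (q (κ i) (z i) * p (κ (σ⁻¹ i)) (z i) * a (z i)))
      (Measure.pi fun _ : Fin m => ν) := by
    intro κ σ
    apply Integrable.const_mul
    exact Integrable.fintype_prod (f := fun i z => q (κ i) z * p (κ (σ⁻¹ i)) z * a z)
      (fun i => hint (κ i) (κ (σ⁻¹ i)))
  refine ⟨integrable_finsetSum _ (fun κ _ => integrable_finsetSum _ (fun σ _ => hI κ σ)), ?_⟩
  rw [integral_finsetSum _ (fun κ _ => integrable_finsetSum _ (fun σ _ => hI κ σ))]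
  apply Finset.sum_congr rfl
  intro κ _
  rw [integral_finsetSum _ (fun σ _ => hI κ σ), Matrix.det_apply']
  apply Finset.sum_congr rfl
  intro σ _
  rw [integral_const_mul, integral_fintype_prod_eq_prod
    (f := fun i z => q (κ i) z * p (κ (σ⁻¹ i)) z * a z)]
  congr 1
  rw [← Equiv.prod_comp σ]
  simp

lemma psd_det_bound {m : ℕ} (A : Matrix (Fin m) (Fin m) ℂ) (hA : A.PosSemidef) (C : ℝ) (hC : 0 < C)
    (h : ∀ i, (A i i).re ≤ C) : ‖A.det‖ ≤ C ^ m := by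
  classical
  have hH := hA.1
  rw [hH.det_eq_prod_eigenvalues, norm_prod]
  have htr : ∑ i, hH.eigenvalues i ≤ m * C := by
    have h1 := hH.trace_eq_sum_eigenvalues
    have h2 := congrArg Complex.re h1
    simp only [Matrix.trace, Matrix.diag] at h2
    have h3 : ∑ i, hH.eigenvalues i = ∑ i, (A i i).re := by
      rw [Complex.re_sum, Complex.re_sum] at h2
      simpa using h2.symm
    rw [h3]
    calc _ ≤ ∑ _i : Fin m, C := Finset.sum_le_sum fun i _ => h i
      _ = _ := by simp
  calc ∏ i, ‖(RCLike.ofReal (hH.eigenvalues i) : ℂ)‖ ≤ ∏ i, C * Real.exp (hH.eigenvalues i / C - 1) := by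
        apply Finset.prod_le_prod
        · intros; positivity
        · intro i _
          have h0 := hA.eigenvalues_nonneg i
          rw [RCLike.norm_ofReal, abs_of_nonneg h0]
          have := Real.add_one_le_exp (hH.eigenvalues i / C - 1)
          calc hH.eigenvalues i = C * (hH.eigenvalues i / C - 1 + 1) := by field_simp; ring
            _ ≤ _ := by gcongr
    _ = C ^ m * Real.exp (∑ i, (hH.eigenvalues i / C - 1)) := by
        rw [Finset.prod_mul_distrib, Real.exp_sum]; simp
    _ ≤ C ^ m * 1 := by
        gcongr
        rw [Real.exp_le_one_iff, Finset.sum_sub_distrib, ← Finset.sum_div]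
        simp only [Finset.sum_const, Finset.card_univ, Fintype.card_fin, nsmul_eq_mul, mul_one, sub_nonpos]
        rwa [div_le_iff₀ hC]
    _ = _ := mul_one _

lemma hasDerivAt_det {d : ℕ} (A : ℝ → Matrix (Fin d) (Fin d) ℂ) (A' : Matrix (Fin d) (Fin d) ℂ) (t : ℝ)
    (h : ∀ i j, HasDerivAt (fun s => A s i j) (A' i j) t) :
    HasDerivAt (fun s => (A s).det) ((A t).adjugate * A').trace t := by
  simp_rw [Matrix.det_apply']
  have h1 := HasDerivAt.fun_sum (u := (Finset.univ : Finset (Equiv.Perm (Fin d)))) (x := t)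
    (A := fun σ s => ((Equiv.Perm.sign σ : ℤ) : ℂ) * ∏ i, A s (σ i) i)
    (A' := fun σ => ((Equiv.Perm.sign σ : ℤ) : ℂ) * ∑ i, (∏ j ∈ Finset.univ.erase i, A t (σ j) j) • A' (σ i) i)
    (fun σ _ => (HasDerivAt.fun_finsetProd (fun i _ => h (σ i) i)).const_mul _)
  refine h1.congr_deriv ?_
  symm
  simp only [Finset.mul_sum]
  rw [Finset.sum_comm, Matrix.trace]
  apply Finset.sum_congr rfl
  intro i _
  have : (((A t).adjugate * A').diag i) = ((A t).updateCol i (fun j => A' j i)).det := by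
    rw [← Matrix.cramer_apply, Matrix.cramer_eq_adjugate_mulVec]
    rfl
  rw [this, Matrix.det_apply']
  apply Finset.sum_congr rfl
  intro σ _
  congr 1
  rw [← Finset.mul_prod_erase _ _ (Finset.mem_univ i), smul_eq_mul, mul_comm]
  congr 1
  · apply Finset.prod_congr rfl
    intro j hj
    rw [Matrix.updateCol_ne (Finset.ne_of_mem_erase hj)]
  · simp

lemma rot_mp {n : ℕ} (c : ℂ) (hc : ‖c‖ = 1) :
    MeasurePreserving (fun v : Fin n → ℂ => c • v) volume volume := by
  have h1 : MeasurePreserving (fun v : ℂ => c * v) volume volume := by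
    have := (rotation ⟨c, by simp [Submonoid.unitSphere, hc]⟩).measurePreserving
    exact this
  exact measurePreserving_pi (fun _ : Fin n => (volume : Measure ℂ)) (fun _ => volume) (fun _ => h1)

lemma mean_value {n : ℕ} (f : (Fin n → ℂ) → ℂ) (z : Fin n → ℂ) (r : ℝ)
    (hf : DifferentiableOn ℂ f (Metric.ball z r)) :
    ‖f z‖ₑ * volume (Metric.ball (0 : Fin n → ℂ) r) ≤ ∫⁻ w in Metric.ball z r, ‖f w‖ₑ := by
  classical
  set g : (Fin n → ℂ) → ℂ := (Metric.ball z r).piecewise f 0 with hg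
  have hgm : Measurable g :=
    hf.continuousOn.measurable_piecewise continuousOn_const measurableSet_ball
  have hgf : ∀ w ∈ Metric.ball z r, g w = f w := fun w hw => Set.piecewise_eq_of_mem _ _ _ hw
  have hcn : ∀ θ : ℝ, ‖circleMap 0 1 θ‖ = 1 := fun θ => by simp
  have key : ∀ v ∈ Metric.ball (0 : Fin n → ℂ) r,
      ‖f z‖ₑ ≤ (ENNReal.ofReal (2 * π))⁻¹ * ∫⁻ θ in Set.Ioc 0 (2 * π), ‖g (z + circleMap 0 1 θ • v)‖ₑ := by
    intro v hv
    have hmem : ∀ ζ ∈ Metric.closedBall (0 : ℂ) 1, z + ζ • v ∈ Metric.ball z r := by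
      intro ζ hζ
      simp only [mem_closedBall_zero_iff] at hζ
      rw [mem_ball_zero_iff] at hv
      rw [mem_ball_iff_norm]
      simp only [add_sub_cancel_left]
      rw [norm_smul]
      nlinarith [norm_nonneg v]
    have hd : DifferentiableOn ℂ (fun ζ : ℂ => f (z + ζ • v)) (Metric.closedBall 0 1) := by
      apply DifferentiableOn.comp hf _ hmem
      fun_prop
    have hdc : DiffContOnCl ℂ (fun ζ : ℂ => f (z + ζ • v)) (Metric.ball 0 |(1:ℝ)|) := by
      rw [abs_one]
      apply DifferentiableOn.diffContOnCl
      apply hd.mono Metric.closure_ball_subset_closedBall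
    have h1 := hdc.circleAverage
    simp only [zero_smul, add_zero] at h1
    rw [← h1, Real.circleAverage_def, intervalIntegral.integral_of_le (by positivity), enorm_smul]
    apply mul_le_mul'
    · rw [Real.enorm_eq_ofReal (by positivity), ENNReal.ofReal_inv_of_pos (by positivity)]
    · refine (enorm_integral_le_lintegral_enorm _).trans (le_of_eq ?_)
      apply lintegral_congr
      intro θ
      rw [hgf _ (hmem _ (by simp))]
  have hpi : ENNReal.ofReal (2 * π) ≠ 0 := by simp [Real.pi_pos]
  calc ‖f z‖ₑ * volume (Metric.ball (0 : Fin n → ℂ) r)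
      = ∫⁻ v in Metric.ball (0 : Fin n → ℂ) r, ‖f z‖ₑ := by rw [setLIntegral_const]
    _ ≤ ∫⁻ v in Metric.ball (0 : Fin n → ℂ) r, (ENNReal.ofReal (2 * π))⁻¹ *
          ∫⁻ θ in Set.Ioc 0 (2 * π), ‖g (z + circleMap 0 1 θ • v)‖ₑ :=
        setLIntegral_mono' measurableSet_ball key
    _ = (ENNReal.ofReal (2 * π))⁻¹ * ∫⁻ v in Metric.ball (0 : Fin n → ℂ) r,
          ∫⁻ θ in Set.Ioc 0 (2 * π), ‖g (z + circleMap 0 1 θ • v)‖ₑ := by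
        rw [lintegral_const_mul' _ _ (ENNReal.inv_ne_top.2 hpi)]
    _ = (ENNReal.ofReal (2 * π))⁻¹ * ∫⁻ θ in Set.Ioc 0 (2 * π), 
          ∫⁻ v in Metric.ball (0 : Fin n → ℂ) r, ‖g (z + circleMap 0 1 θ • v)‖ₑ := by
        rw [lintegral_lintegral_swap]
        apply Measurable.aemeasurable
        apply Measurable.enorm
        apply hgm.comp
        have : Continuous (fun x : (Fin n → ℂ) × ℝ => z + circleMap 0 1 x.2 • x.1) := by
          have := continuous_circleMap 0 1
          fun_prop
        exact this.measurable
    _ = (ENNReal.ofReal (2 * π))⁻¹ * ∫⁻ θ in Set.Ioc 0 (2 * π), 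
          ∫⁻ w in Metric.ball z r, ‖f w‖ₑ := by
        congr 1
        apply lintegral_congr
        intro θ
        have hr := (rot_mp (n := n) (circleMap 0 1 θ) (hcn θ))
        have hmp := (measurePreserving_add_left volume z).comp hr
        have hpre : ((fun x => z + x) ∘ fun v : Fin n → ℂ => circleMap 0 1 θ • v) ⁻¹' (Metric.ball z r)
            = Metric.ball 0 r := by
          ext v
          simp [norm_smul]
        have := hmp.setLIntegral_comp_preimage (s := Metric.ball z r) measurableSet_ball
          (f := fun w => ‖g w‖ₑ) (hgm.enorm)
        rw [hpre] at this
        rw [show (∫⁻ w in Metric.ball z r, ‖f w‖ₑ) = ∫⁻ w in Metric.ball z r, ‖g w‖ₑ from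
          setLIntegral_congr_fun measurableSet_ball (fun w hw => by simp only [hgf w hw]), ← this]
        rfl
    _ = _ := by
        rw [setLIntegral_const, Real.volume_Ioc, sub_zero, mul_comm _ (ENNReal.ofReal _), ← mul_assoc,
          ENNReal.inv_mul_cancel hpi ENNReal.ofReal_ne_top, one_mul]

lemma bergman_ineq {n : ℕ} (Ω : Set (Fin n → ℂ)) (hΩ : IsOpen Ω) (ψ : (Fin n → ℂ) → ℝ)
    (hψ : ContinuousOn ψ Ω) (L : Set (Fin n → ℂ)) (hL : IsCompact L) (hLΩ : L ⊆ Ω) :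
    ∃ C : ℝ, 0 < C ∧ ∀ f : (Fin n → ℂ) → ℂ, DifferentiableOn ℂ f Ω → ∀ z ∈ L,
      ENNReal.ofReal (‖f z‖ ^ 2) ≤ ENNReal.ofReal C *
        ∫⁻ z in Ω, ENNReal.ofReal (‖f z‖ ^ 2 * Real.exp (-ψ z)) := by
  obtain ⟨r, hr, hrΩ⟩ := hL.exists_cthickening_subset_open hΩ hLΩ
  have hcomp : IsCompact (Metric.cthickening r L) := hL.cthickening
  obtain ⟨A, hA⟩ := (hcomp.image_of_continuousOn (hψ.mono hrΩ)).bddAbove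
  have hA' : ∀ w ∈ Metric.cthickening r L, ψ w ≤ A := fun w hw => hA (Set.mem_image_of_mem _ hw)
  set V := volume (Metric.ball (0 : Fin n → ℂ) r) with hV
  have hV0 : V ≠ 0 := (Metric.measure_ball_pos _ _ hr).ne'
  have hVt : V ≠ ⊤ := measure_ball_lt_top.ne
  have hVr : 0 < V.toReal := ENNReal.toReal_pos hV0 hVt
  refine ⟨V.toReal⁻¹ * Real.exp A, by positivity, ?_⟩
  intro f hf z hz
  have hball : Metric.ball z r ⊆ Metric.cthickening r L :=
    (Metric.ball_subset_thickening hz r).trans (Metric.thickening_subset_cthickening r L)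
  have h1 := mean_value (fun w => f w ^ 2) z r ((hf.mono (hball.trans hrΩ)).pow 2)
  have h2 : ∫⁻ w in Metric.ball z r, ‖f w ^ 2‖ₑ ≤
      ENNReal.ofReal (Real.exp A) * ∫⁻ z in Ω, ENNReal.ofReal (‖f z‖ ^ 2 * Real.exp (-ψ z)) := by
    calc _ ≤ ∫⁻ w in Metric.ball z r, ENNReal.ofReal (Real.exp A) * ENNReal.ofReal (‖f w‖ ^ 2 * Real.exp (-ψ w)) := by
          apply setLIntegral_mono' measurableSet_ball
          intro w hw
          rw [← ENNReal.ofReal_mul (by positivity), ← ofReal_norm, norm_pow]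
          apply ENNReal.ofReal_le_ofReal
          have : 1 ≤ Real.exp A * Real.exp (-ψ w) := by
            rw [← Real.exp_add, Real.one_le_exp_iff]
            linarith [hA' w (hball hw)]
          nlinarith [sq_nonneg ‖f w‖]
      _ ≤ ∫⁻ w in Ω, ENNReal.ofReal (Real.exp A) * ENNReal.ofReal (‖f w‖ ^ 2 * Real.exp (-ψ w)) :=
          lintegral_mono_set (hball.trans hrΩ)
      _ = _ := lintegral_const_mul' _ _ ENNReal.ofReal_ne_top
  have h3 := h1.trans h2
  rw [← ofReal_norm, norm_pow, ← hV] at h3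
  rw [ENNReal.ofReal_mul (by positivity), ENNReal.ofReal_inv_of_pos hVr, ENNReal.ofReal_toReal hVt, mul_assoc]
  calc _ = V⁻¹ * (ENNReal.ofReal (‖f z‖ ^ 2) * V) := by
        rw [mul_comm _ V, ← mul_assoc, ENNReal.inv_mul_cancel hV0 hVt, one_mul]
    _ ≤ _ := by gcongr

lemma limit_log (l FN : ℕ → ℝ → ℝ) (F : ℝ → ℝ) (S : ℝ → ℂ) (B : ℝ) (ω : ℝ → ℝ)
    (hder : ∀ N, ∀ t ∈ Set.Icc (0:ℝ) 1, HasDerivAt (l N) (FN N t) t) (h0 : ∀ N, l N 0 = 0)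
    (hB : ∀ N, ∀ t ∈ Set.Icc (0:ℝ) 1, |FN N t| ≤ B)
    (hω : ∀ N, ∀ s ∈ Set.Icc (0:ℝ) 1, ∀ t ∈ Set.Icc (0:ℝ) 1, |FN N s - FN N t| ≤ ω |s - t|)
    (hωm : Monotone ω) (hω0 : Tendsto ω (𝓝 0) (𝓝 0))
    (hF : ∀ t ∈ Set.Icc (0:ℝ) 1, Tendsto (fun N => FN N t) atTop (𝓝 (F t)))
    (hS : ∀ t ∈ Set.Icc (0:ℝ) 1, Tendsto (fun N => ((Real.exp (l N t) : ℝ) : ℂ)) atTop (𝓝 (S t))) :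
    (∀ t ∈ Set.Icc (0:ℝ) 1, (S t).im = 0 ∧ 0 < (S t).re) ∧
    ∀ t ∈ Set.Icc (0:ℝ) 1, HasDerivWithinAt (fun s => Real.log (S s).re) (F t) (Set.Icc 0 1) t := by
  have h1 : ∀ t ∈ Set.Icc (0:ℝ) 1, Tendsto (fun N => Real.exp (l N t)) atTop (𝓝 (S t).re) := by
    intro t ht
    have := (Complex.continuous_re.tendsto _).comp (hS t ht)
    simpa only [Function.comp_def, Complex.ofReal_re] using this
  have h2 : ∀ t ∈ Set.Icc (0:ℝ) 1, (S t).im = 0 := by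
    intro t ht
    have := (Complex.continuous_im.tendsto _).comp (hS t ht)
    simp only [Function.comp_def, Complex.ofReal_im] at this
    exact (tendsto_nhds_unique this tendsto_const_nhds)
  have h3 : ∀ N, ∀ t ∈ Set.Icc (0:ℝ) 1, |l N t| ≤ B := by
    intro N t ht
    have := (convex_Icc (0:ℝ) 1).norm_image_sub_le_of_norm_hasDerivWithin_le
      (fun x hx => (hder N x hx).hasDerivWithinAt) (fun x hx => hB N x hx)
      (Set.left_mem_Icc.2 zero_le_one) ht
    rw [h0, sub_zero, sub_zero, Real.norm_eq_abs, Real.norm_eq_abs, abs_of_nonneg ht.1] at this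
    have hB0 : 0 ≤ B := (abs_nonneg _).trans (hB N t ht)
    nlinarith [ht.2]
  have h4 : ∀ t ∈ Set.Icc (0:ℝ) 1, 0 < (S t).re := by
    intro t ht
    refine lt_of_lt_of_le (Real.exp_pos (-B)) (ge_of_tendsto' (h1 t ht) fun N => ?_)
    exact Real.exp_le_exp.2 (abs_le.1 (h3 N t ht)).1
  refine ⟨fun t ht => ⟨h2 t ht, h4 t ht⟩, ?_⟩
  have h5 : ∀ t ∈ Set.Icc (0:ℝ) 1, Tendsto (fun N => l N t) atTop (𝓝 (Real.log (S t).re)) := by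
    intro t ht
    have := (h1 t ht).log (h4 t ht).ne'
    simpa using this
  intro t ht
  have h6 : ∀ s ∈ Set.Icc (0:ℝ) 1, 
      |Real.log (S s).re - Real.log (S t).re - F t * (s - t)| ≤ ω |s - t| * |s - t| := by
    intro s hs
    have hlim := (((h5 s hs).sub (h5 t ht)).sub ((hF t ht).mul_const (s - t))).abs
    refine le_of_tendsto' hlim fun N => ?_
    have hsub : Set.uIcc t s ⊆ Set.Icc (0:ℝ) 1 := Set.ordConnected_Icc.uIcc_subset ht hs
    have := (convex_uIcc t s).norm_image_sub_le_of_norm_hasDerivWithin_le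
      (f := fun x => l N x - FN N t * x) (f' := fun x => FN N x - FN N t) (C := ω |s - t|)
      (fun x hx => by
        have h := (hder N x (hsub hx)).sub ((hasDerivAt_id x).const_mul (FN N t))
        rw [mul_one] at h
        exact h.hasDerivWithinAt) 
      (fun x hx => by
        refine (hω N x (hsub hx) t ht).trans (hωm ?_)
        exact Set.abs_sub_left_of_mem_uIcc hx) 
      Set.left_mem_uIcc Set.right_mem_uIcc
    simp only [Real.norm_eq_abs] at this
    refine le_trans (le_of_eq ?_) this
    congr 1
    ring
  rw [hasDerivWithinAt_iff_isLittleO, Asymptotics.isLittleO_iff]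
  intro c hc
  have h7 : Tendsto (fun s => ω |s - t|) (𝓝 t) (𝓝 0) := by
    apply hω0.comp
    have : Continuous (fun s : ℝ => |s - t|) := by fun_prop
    simpa using this.tendsto t
  have h8 : ∀ᶠ s in 𝓝 t, ω |s - t| < c := h7.eventually (gt_mem_nhds hc)
  filter_upwards [mem_nhdsWithin_of_mem_nhds h8, self_mem_nhdsWithin] with s hs1 hs2
  simp only [Real.norm_eq_abs, smul_eq_mul]
  have := h6 s hs2
  rw [mul_comm (F t)] at this
  have h9 : ω |s - t| * |s - t| ≤ c * |s - t| := by gcongr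
  linarith

instance spanRangeHOP {E : Type*} [NormedAddCommGroup E] [InnerProductSpace ℂ E] {d : ℕ} (b : Fin d → E) :
    (Submodule.span ℂ (Set.range b)).HasOrthogonalProjection := by
  have : FiniteDimensional ℂ (Submodule.span ℂ (Set.range b)) :=
    FiniteDimensional.span_of_finite ℂ (Set.finite_range b)
  have : CompleteSpace (Submodule.span ℂ (Set.range b)) := FiniteDimensional.complete ℂ _
  infer_instance

lemma proj_formula {E : Type*} [NormedAddCommGroup E] [InnerProductSpace ℂ E] {d : ℕ} (b : Fin d → E)
    (hb : LinearIndependent ℂ b) (x y : E) :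
    inner ℂ ((Submodule.span ℂ (Set.range b)).starProjection x)
      ((Submodule.span ℂ (Set.range b)).starProjection y) =
    ∑ i, ∑ j, inner ℂ x (b i) * (Matrix.gram ℂ b)⁻¹ i j * inner ℂ (b j) y := by
  classical
  set U := Submodule.span ℂ (Set.range b) with hU
  have hdet : (Matrix.gram ℂ b).det ≠ 0 := Matrix.det_gram_ne_zero_iff_linearIndependent.2 hb
  set c : Fin d → ℂ := (Matrix.gram ℂ b)⁻¹.mulVec (fun j => inner ℂ (b j) y) with hc
  have hGc : (Matrix.gram ℂ b).mulVec c = fun j => inner ℂ (b j) y := by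
    rw [hc, Matrix.mulVec_mulVec, Matrix.mul_nonsing_inv _ (isUnit_iff_ne_zero.2 hdet), Matrix.one_mulVec]
  have hmem : ∑ i, c i • b i ∈ U :=
    Submodule.sum_mem _ fun i _ => Submodule.smul_mem _ _ (Submodule.subset_span ⟨i, rfl⟩)
  have hP : U.starProjection y = ∑ i, c i • b i := by
    apply Submodule.eq_starProjection_of_mem_orthogonal hmem
    rw [Submodule.mem_orthogonal]
    intro u hu
    rw [hU] at hu
    induction hu using Submodule.span_induction with
    | mem u hu =>
      obtain ⟨j, rfl⟩ := hu
      have := congrFun hGc j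
      simp only [Matrix.mulVec, dotProduct, Matrix.gram_apply] at this
      rw [inner_sub_right, inner_sum, ← this]
      simp only [inner_smul_right]
      rw [sub_eq_zero]
      exact Finset.sum_congr rfl fun i _ => mul_comm _ _
    | zero => simp
    | add u w _ _ h1 h2 => rw [inner_add_left, h1, h2, add_zero]
    | smul a u _ h => rw [inner_smul_left, h, mul_zero]
  rw [Submodule.inner_starProjection_left_eq_right]
  have hidem : U.starProjection (U.starProjection y) = U.starProjection y := by
    rw [Submodule.starProjection_eq_self_iff]
    exact Submodule.starProjection_apply_mem _ _
  rw [hidem, hP, inner_sum]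
  apply Finset.sum_congr rfl
  intro i _
  rw [inner_smul_right, hc, Matrix.mulVec, dotProduct, Finset.sum_mul]
  apply Finset.sum_congr rfl
  intro j _
  ring

structure BSetup {α : Type*} [MeasurableSpace α] (ν : Measure α) where
  ρ : α → ℝ
  v : α → ℝ
  M : ℝ
  W : Submodule ℂ (α → ℂ)
  hρm : AEMeasurable ρ ν
  hρ : ∀ z, 0 < ρ z
  hvm : Measurable v
  hv : ∀ z, |v z| ≤ M
  hWm : ∀ f ∈ W, AEStronglyMeasurable f ν
  hWi : ∀ f ∈ W, Integrable (fun z => ‖f z‖ ^ 2 * ρ z) ν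

namespace BSetup

variable {α : Type*} [MeasurableSpace α] {ν : Measure α} (B : BSetup ν)

def wt (t : ℝ) (z : α) : ℝ := B.ρ z * Real.exp (-(t * B.v z))

lemma wt_pos (t : ℝ) (z : α) : 0 < B.wt t z := mul_pos (B.hρ z) (Real.exp_pos _)

lemma M_nonneg (z : α) : 0 ≤ B.M := (abs_nonneg _).trans (B.hv z)

lemma wt_aem (t : ℝ) : AEMeasurable (B.wt t) ν := by
  apply B.hρm.mul
  exact (Real.measurable_exp.comp (B.hvm.const_mul t).neg).aemeasurable

lemma wt_le (s t : ℝ) (z : α) : B.wt s z ≤ Real.exp (B.M * |s - t|) * B.wt t z := by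
  unfold wt
  rw [mul_left_comm, ← Real.exp_add]
  have := (B.hρ z).le
  gcongr
  have h1 : |(s - t) * B.v z| ≤ |s - t| * B.M := by
    rw [abs_mul]; exact mul_le_mul_of_nonneg_left (B.hv z) (abs_nonneg _)
  have := (abs_le.1 h1).1
  nlinarith

lemma sq_integrable (f : B.W) (t : ℝ) : Integrable (fun z => ‖(f : α → ℂ) z‖ ^ 2 * B.wt t z) ν := by
  refine ((B.hWi f f.2).const_mul (Real.exp (B.M * |t - 0|))).mono' ?_ ?_
  · exact ((B.hWm f f.2).norm.pow 2).mul (B.wt_aem t).aestronglyMeasurable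
  · refine Eventually.of_forall fun z => ?_
    rw [Real.norm_eq_abs, abs_of_nonneg (mul_nonneg (sq_nonneg _) (B.wt_pos t z).le)]
    have := B.wt_le t 0 z
    have h0 : B.wt 0 z = B.ρ z := by simp [wt]
    rw [h0] at this
    nlinarith [sq_nonneg ‖(f : α → ℂ) z‖]

lemma memLp_J (f : B.W) (t : ℝ) :
    MemLp (fun z => (f : α → ℂ) z * ((Real.sqrt (B.wt t z) : ℝ) : ℂ)) 2 ν := by
  rw [memLp_two_iff_integrable_sq_norm]
  · refine (B.sq_integrable f t).congr (Eventually.of_forall fun z => ?_)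
    simp only [norm_mul, Complex.norm_real, Real.norm_eq_abs, mul_pow, sq_abs]
    rw [Real.sq_sqrt (B.wt_pos t z).le]
  · apply (B.hWm f f.2).mul
    exact ((Complex.measurable_ofReal.comp Real.continuous_sqrt.measurable).comp_aemeasurable
      (B.wt_aem t)).aestronglyMeasurable

def J (t : ℝ) : B.W →ₗ[ℂ] Lp ℂ 2 ν where
  toFun f := (B.memLp_J f t).toLp _
  map_add' f g := by
    rw [← MemLp.toLp_add, MemLp.toLp_eq_toLp_iff]
    refine Eventually.of_forall fun z => ?_
    simp [add_mul]
  map_smul' c f := by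
    rw [RingHom.id_apply, ← MemLp.toLp_const_smul, MemLp.toLp_eq_toLp_iff]
    refine Eventually.of_forall fun z => ?_
    simp [mul_assoc]

lemma sqrt_mul_sqrt' (t : ℝ) (z : α) :
    ((Real.sqrt (B.wt t z) : ℝ) : ℂ) * ((Real.sqrt (B.wt t z) : ℝ) : ℂ) = (B.wt t z : ℂ) := by
  rw [← Complex.ofReal_mul, Real.mul_self_sqrt (B.wt_pos t z).le]

lemma J_ae (t : ℝ) (f g : B.W) : (fun z => inner ℂ (B.J t f z) (B.J t g z)) =ᵐ[ν]
    fun z => (starRingEnd ℂ) ((f : α → ℂ) z) * (g : α → ℂ) z * (B.wt t z : ℂ) := by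
  filter_upwards [(B.memLp_J f t).coeFn_toLp, (B.memLp_J g t).coeFn_toLp] with z h1 h2
  change inner ℂ ((B.memLp_J f t).toLp _ z) ((B.memLp_J g t).toLp _ z) = _
  rw [h1, h2, RCLike.inner_apply, map_mul, Complex.conj_ofReal, ← B.sqrt_mul_sqrt']
  ring

lemma integrable_prod (t : ℝ) (f g : B.W) :
    Integrable (fun z => (starRingEnd ℂ) ((f : α → ℂ) z) * (g : α → ℂ) z * (B.wt t z : ℂ)) ν :=
  (L2.integrable_inner (B.J t f) (B.J t g)).congr (B.J_ae t f g)

lemma inner_J (t : ℝ) (f g : B.W) : inner ℂ (B.J t f) (B.J t g) =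
    ∫ z, (starRingEnd ℂ) ((f : α → ℂ) z) * (g : α → ℂ) z * (B.wt t z : ℂ) ∂ν := by
  rw [L2.inner_def]
  exact integral_congr_ae (B.J_ae t f g)

lemma norm_J (t : ℝ) (f : B.W) : ‖B.J t f‖ ^ 2 = ∫ z, ‖(f : α → ℂ) z‖ ^ 2 * B.wt t z ∂ν := by
  have h := B.inner_J t f f
  rw [inner_self_eq_norm_sq_to_K] at h
  have h2 : ∫ z, (starRingEnd ℂ) ((f : α → ℂ) z) * (f : α → ℂ) z * (B.wt t z : ℂ) ∂ν =
      ((∫ z, ‖(f : α → ℂ) z‖ ^ 2 * B.wt t z ∂ν : ℝ) : ℂ) := by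
    refine Eq.trans ?_ (integral_complex_ofReal (μ := ν) (f := fun z => ‖(f : α → ℂ) z‖ ^ 2 * B.wt t z))
    apply integral_congr_ae
    refine Eventually.of_forall fun z => ?_
    simp only
    rw [Complex.conj_mul']
    push_cast
    rfl
  rw [h2] at h
  apply Complex.ofReal_injective
  rw [← h]
  push_cast
  rfl

lemma norm_J_le (s t : ℝ) (f : B.W) : ‖B.J s f‖ ^ 2 ≤ Real.exp (B.M * |s - t|) * ‖B.J t f‖ ^ 2 := by
  rw [B.norm_J, B.norm_J, ← integral_const_mul]
  apply integral_mono (B.sq_integrable f s) ((B.sq_integrable f t).const_mul _)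
  intro z
  simp only
  have := B.wt_le s t z
  nlinarith [sq_nonneg ‖(f : α → ℂ) z‖]

lemma J_eq_zero (s t : ℝ) (f : B.W) (h : B.J t f = 0) : B.J s f = 0 := by
  have := B.norm_J_le s t f
  rw [h] at this
  simp only [norm_zero] at this
  have h2 : ‖B.J s f‖ ^ 2 ≤ 0 := by simpa using this
  have h3 : ‖B.J s f‖ = 0 := by nlinarith [norm_nonneg (B.J s f)]
  exact norm_eq_zero.1 h3

lemma exists_basis {N : ℕ} (f : Fin N → B.W) : ∃ (d : ℕ) (b : Fin d → B.W), ∀ t : ℝ,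
    LinearIndependent ℂ (fun i => B.J t (b i)) ∧
    ∀ i, B.J t (f i) ∈ Submodule.span ℂ (Set.range fun i => B.J t (b i)) := by
  set U := Submodule.span ℂ (Set.range fun i => B.J 0 (f i)) with hU
  have : FiniteDimensional ℂ U := FiniteDimensional.span_of_finite ℂ (Set.finite_range _)
  let β := Module.finBasis ℂ U
  have hUr : U ≤ LinearMap.range (B.J 0) := by
    rw [hU, Submodule.span_le]
    rintro _ ⟨i, rfl⟩
    exact ⟨f i, rfl⟩
  have hex : ∀ j, ∃ g : B.W, B.J 0 g = (β j : Lp ℂ 2 ν) := fun j => hUr (β j).2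
  choose b hb using hex
  refine ⟨_, b, fun t => ⟨?_, ?_⟩⟩
  · rw [Fintype.linearIndependent_iff]
    intro g hg
    have h1 : B.J t (∑ i, g i • b i) = 0 := by
      rw [map_sum, ← hg]; simp
    have h2 := B.J_eq_zero 0 t _ h1
    have h3 : ∑ i, g i • (β i) = 0 := by
      apply Subtype.ext
      rw [map_sum] at h2
      simp only [map_smul, hb] at h2
      push_cast
      exact h2
    exact Fintype.linearIndependent_iff.1 β.linearIndependent g h3
  · intro i
    let y : U := ⟨B.J 0 (f i), Submodule.subset_span ⟨i, rfl⟩⟩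
    have h1 : ∑ j, β.repr y j • β j = y := β.sum_repr y
    have h2 : B.J 0 (f i - ∑ j, β.repr y j • b j) = 0 := by
      rw [map_sub, map_sum, sub_eq_zero]
      simp only [map_smul, hb]
      have := congrArg (Subtype.val) h1
      push_cast at this
      exact this.symm
    have h3 := B.J_eq_zero t 0 _ h2
    rw [map_sub, sub_eq_zero] at h3
    rw [h3, map_sum]
    refine Submodule.sum_mem _ fun j _ => ?_
    rw [map_smul]
    exact Submodule.smul_mem _ _ (Submodule.subset_span ⟨j, rfl⟩)

lemma exists_dense [SigmaFinite ν] [MeasurableSpace.CountablyGenerated α] : ∃ f : ℕ → B.W, ∀ g : B.W, ∀ t : ℝ, ∀ ε > 0,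
    ∃ i, ‖B.J t g - B.J t (f i)‖ < ε := by
  have : Fact ((2 : ℝ≥0∞) ≠ ⊤) := ⟨by simp⟩
  have hsep : TopologicalSpace.IsSeparable (Set.range (B.J 0)) := TopologicalSpace.IsSeparable.of_separableSpace _
  obtain ⟨c, hcs, hcc, hcl⟩ := hsep.exists_countable_dense_subset
  have hne : c.Nonempty := by
    rw [← closure_nonempty_iff]
    exact ⟨_, hcl ⟨0, rfl⟩⟩
  obtain ⟨q, hq⟩ := hcc.exists_eq_range hne
  have hex : ∀ i, ∃ g : B.W, B.J 0 g = q i := fun i => hcs (hq ▸ ⟨i, rfl⟩)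
  choose f hf using hex
  refine ⟨f, fun g t ε hε => ?_⟩
  have hg : B.J 0 g ∈ closure c := hcl ⟨g, rfl⟩
  rw [Metric.mem_closure_iff] at hg
  obtain ⟨y, hy, hd⟩ := hg (ε / Real.exp (B.M * |t - 0|)) (by positivity)
  rw [hq] at hy
  obtain ⟨i, rfl⟩ := hy
  refine ⟨i, ?_⟩
  rw [dist_eq_norm, ← hf, ← map_sub] at hd
  rw [← map_sub]
  have h1 := B.norm_J_le t 0 (g - f i)
  set E := Real.exp (B.M * |t - 0|) with hE
  have hEp : 0 < E := Real.exp_pos _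
  by_cases hα : Nonempty α
  · obtain ⟨z⟩ := hα
    have hE1 : 1 ≤ E := Real.one_le_exp (mul_nonneg (B.M_nonneg z) (abs_nonneg _))
    rw [lt_div_iff₀ hEp] at hd
    have h2 : ‖B.J t (g - f i)‖ ^ 2 ≤ (‖B.J 0 (g - f i)‖ * E) ^ 2 := by
      refine h1.trans ?_
      rw [mul_pow, mul_comm]
      gcongr
      nlinarith
    exact lt_of_le_of_lt ((le_abs_self _).trans (abs_le_of_sq_le_sq h2 (by positivity))) hd
  · have : g - f i = 0 := by
      ext z; exact absurd ⟨z⟩ hα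
    rw [this, map_zero, norm_zero]; exact hε

end BSetup

namespace BSetup

variable {α : Type*} [MeasurableSpace α] {ν : Measure α} (B : BSetup ν) {d : ℕ} (b : Fin d → B.W)

def G (t : ℝ) : Matrix (Fin d) (Fin d) ℂ := Matrix.gram ℂ (fun i => B.J t (b i))

def Kf (t : ℝ) (z w : α) : ℂ :=
  ∑ i, ∑ j, (b i : α → ℂ) z * (B.G b t)⁻¹ i j * (starRingEnd ℂ) ((b j : α → ℂ) w)

lemma G_apply (t : ℝ) (i j : Fin d) : B.G b t i j =
    ∫ z, (starRingEnd ℂ) ((b i : α → ℂ) z) * (b j : α → ℂ) z * (B.wt t z : ℂ) ∂ν := by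
  rw [G, Matrix.gram_apply, inner_J]

lemma G_deriv (t : ℝ) (f g : B.W) :
    Integrable (fun z => (starRingEnd ℂ) ((f : α → ℂ) z) * (g : α → ℂ) z *
      ((-(B.v z * B.wt t z) : ℝ) : ℂ)) ν ∧
    HasDerivAt (fun s : ℝ => ∫ z, (starRingEnd ℂ) ((f : α → ℂ) z) * (g : α → ℂ) z * (B.wt s z : ℂ) ∂ν)
    (∫ z, (starRingEnd ℂ) ((f : α → ℂ) z) * (g : α → ℂ) z * ((-(B.v z * B.wt t z) : ℝ) : ℂ) ∂ν) t := by
  have hb := ((B.integrable_prod t f g).norm).const_mul (B.M * Real.exp (B.M * 1))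
  refine hasDerivAt_integral_of_dominated_loc_of_deriv_le
    (F := fun (s : ℝ) z => (starRingEnd ℂ) ((f : α → ℂ) z) * (g : α → ℂ) z * (B.wt s z : ℂ))
    (F' := fun (s : ℝ) z => (starRingEnd ℂ) ((f : α → ℂ) z) * (g : α → ℂ) z *
      ((-(B.v z * B.wt s z) : ℝ) : ℂ)) (Metric.ball_mem_nhds t one_pos) ?_ ?_ ?_ ?_ hb ?_
  · exact Eventually.of_forall fun s => (B.integrable_prod s f g).aestronglyMeasurable
  · exact B.integrable_prod t f g
  · have h1 := (B.integrable_prod t f g).aestronglyMeasurable.mul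
      (Complex.measurable_ofReal.comp (B.hvm.neg)).aestronglyMeasurable
    refine h1.congr (Eventually.of_forall fun z => ?_)
    simp only [Function.comp_def, Pi.mul_apply, Pi.neg_apply]
    push_cast
    ring
  · refine Eventually.of_forall fun z s hs => ?_
    rw [norm_mul, norm_mul _ ((B.wt t z : ℝ) : ℂ), Complex.norm_real, Complex.norm_real, norm_neg,
      norm_mul (B.v z)]
    simp only [Real.norm_eq_abs, abs_of_pos (B.wt_pos _ z)]
    have hM := B.M_nonneg z
    have h1 : B.wt s z ≤ Real.exp (B.M * 1) * B.wt t z := by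
      refine (B.wt_le s t z).trans ?_
      have := (B.wt_pos t z).le
      have hs' : |s - t| ≤ 1 := by rw [← Real.dist_eq]; exact (Metric.mem_ball.1 hs).le
      gcongr
    have h2 : |B.v z| * B.wt s z ≤ B.M * (Real.exp (B.M * 1) * B.wt t z) :=
      mul_le_mul (B.hv z) h1 (B.wt_pos _ z).le hM
    calc _ ≤ ‖(starRingEnd ℂ) ((f : α → ℂ) z) * (g : α → ℂ) z‖ * (B.M * (Real.exp (B.M * 1) * B.wt t z)) := by
          gcongr
      _ = _ := by ring
  · refine Eventually.of_forall fun z s hs => ?_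
    apply HasDerivAt.const_mul
    apply HasDerivAt.ofReal_comp
    unfold wt
    have h1 : HasDerivAt (fun s : ℝ => -(s * B.v z)) (-(1 * B.v z)) s :=
      ((hasDerivAt_id s).mul_const (B.v z)).neg
    refine ((h1.exp).const_mul (B.ρ z)).congr_deriv ?_
    ring

lemma Kf_integrable (t : ℝ) : Integrable (fun w => B.Kf b t w w * ((-(B.v w * B.wt t w) : ℝ) : ℂ)) ν ∧
    ∫ w, B.Kf b t w w * ((-(B.v w * B.wt t w) : ℝ) : ℂ) ∂ν =
      ∑ i, ∑ j, (B.G b t)⁻¹ i j * ∫ z, (starRingEnd ℂ) ((b j : α → ℂ) z) * (b i : α → ℂ) z *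
        ((-(B.v z * B.wt t z) : ℝ) : ℂ) ∂ν := by
  have h : (fun w => B.Kf b t w w * ((-(B.v w * B.wt t w) : ℝ) : ℂ)) = fun w => ∑ i, ∑ j,
      (B.G b t)⁻¹ i j * ((starRingEnd ℂ) ((b j : α → ℂ) w) * (b i : α → ℂ) w *
        ((-(B.v w * B.wt t w) : ℝ) : ℂ)) := by
    funext w
    unfold Kf
    rw [Finset.sum_mul]
    refine Finset.sum_congr rfl fun i _ => ?_
    rw [Finset.sum_mul]
    refine Finset.sum_congr rfl fun j _ => ?_
    ring
  have hi : ∀ i j, Integrable (fun w => (B.G b t)⁻¹ i j * ((starRingEnd ℂ) ((b j : α → ℂ) w) *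
      (b i : α → ℂ) w * ((-(B.v w * B.wt t w) : ℝ) : ℂ))) ν := fun i j =>
    (B.G_deriv t (b j) (b i)).1.const_mul _
  rw [h]
  constructor
  · exact integrable_finsetSum _ fun i _ => integrable_finsetSum _ fun j _ => hi i j
  · rw [integral_finsetSum _ fun i _ => integrable_finsetSum _ fun j _ => hi i j]
    refine Finset.sum_congr rfl fun i _ => ?_
    rw [integral_finsetSum _ fun j _ => hi i j]
    refine Finset.sum_congr rfl fun j _ => ?_
    rw [integral_const_mul]

lemma G_det (hb : ∀ t : ℝ, LinearIndependent ℂ (fun i => B.J t (b i))) (t : ℝ) : 0 < (B.G b t).det.re ∧ (B.G b t).det.im = 0 := by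
  have := (Matrix.posDef_gram_of_linearIndependent (hb t)).det_pos
  rw [Complex.lt_def] at this
  exact ⟨this.1, this.2.symm⟩

def FN (t : ℝ) : ℝ := ∫ w, -((B.Kf b t w w).re * B.v w * B.wt t w) ∂ν

def lN (t : ℝ) : ℝ := Real.log (B.G b t).det.re - Real.log (B.G b 0).det.re

lemma FN_eq (t : ℝ) : B.FN b t = (∫ w, B.Kf b t w w * ((-(B.v w * B.wt t w) : ℝ) : ℂ) ∂ν).re := by
  rw [FN]
  have := integral_re (B.Kf_integrable b t).1
  simp only [RCLike.re_eq_complex_re] at this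
  rw [← this]
  congr 1
  funext w
  rw [Complex.re_mul_ofReal]
  ring

lemma FN_integrable (t : ℝ) : Integrable (fun w => (B.Kf b t w w).re * B.v w * B.wt t w) ν := by
  have := (B.Kf_integrable b t).1.re.neg
  refine this.congr (Eventually.of_forall fun w => ?_)
  simp only [RCLike.re_eq_complex_re, Pi.neg_apply]
  rw [Complex.re_mul_ofReal]
  ring

lemma G_hasDerivAt (t : ℝ) : HasDerivAt (fun s => (B.G b s).det)
    ((B.G b t).adjugate * Matrix.of fun i j => ∫ z, (starRingEnd ℂ) ((b i : α → ℂ) z) * (b j : α → ℂ) z *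
        ((-(B.v z * B.wt t z) : ℝ) : ℂ) ∂ν).trace t := by
  apply hasDerivAt_det
  intro i j
  simp only [G_apply, Matrix.of_apply]
  exact (B.G_deriv t (b i) (b j)).2

lemma lN_deriv (hb : ∀ t : ℝ, LinearIndependent ℂ (fun i => B.J t (b i))) (t : ℝ) : HasDerivAt (B.lN b) (B.FN b t) t := by
  have h1 := B.G_hasDerivAt b t
  have h2 : HasDerivAt (fun s => (B.G b s).det.re) _ t :=
    (Complex.reCLM.hasFDerivAt.comp_hasDerivAt t h1)
  have h3 := (h2.log (B.G_det b hb t).1.ne').sub_const (Real.log (B.G b 0).det.re)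
  refine HasDerivAt.congr_deriv h3 ?_
  symm
  rw [FN_eq, (B.Kf_integrable b t).2, eq_div_iff (B.G_det b hb t).1.ne', Complex.reCLM_apply]
  have hd : (((B.G b t).det.re : ℝ) : ℂ) = (B.G b t).det := by
    apply Complex.ext
    · simp
    · simp [(B.G_det b hb t).2]
  rw [← Complex.re_mul_ofReal, hd]
  congr 1
  have hne : (B.G b t).det ≠ 0 := by
    intro h; have := (B.G_det b hb t).1; rw [h] at this; simp at this
  have hadj : (B.G b t).adjugate = (B.G b t).det • (B.G b t)⁻¹ := by
    rw [Matrix.inv_def, smul_smul, Ring.mul_inverse_cancel _ (isUnit_iff_ne_zero.2 hne), one_smul]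
  rw [hadj, Matrix.smul_mul, Matrix.trace_smul, smul_eq_mul, mul_comm]
  congr 1

lemma Kf_term (t : ℝ) (m : ℕ) [SigmaFinite ν] :
    Integrable (fun z => Matrix.det (Matrix.of fun i j : Fin m => B.Kf b 0 (z i) (z j)) *
      ∏ l : Fin m, (((Real.exp (-(t * B.v (z l))) - 1) * B.ρ (z l) : ℝ) : ℂ)) (Measure.pi fun _ : Fin m => ν) ∧
    ∫ z, Matrix.det (Matrix.of fun i j : Fin m => B.Kf b 0 (z i) (z j)) *
      ∏ l : Fin m, (((Real.exp (-(t * B.v (z l))) - 1) * B.ρ (z l) : ℝ) : ℂ) ∂(Measure.pi fun _ : Fin m => ν) =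
    ∑ κ : Fin m → Fin d, (((B.G b t - B.G b 0) * (B.G b 0)⁻¹).submatrix κ κ).det := by
  have hw : ∀ z, (((Real.exp (-(t * B.v z)) - 1) * B.ρ z : ℝ) : ℂ) = (B.wt t z : ℂ) - (B.wt 0 z : ℂ) := by
    intro z
    simp only [wt, zero_mul, neg_zero, Real.exp_zero, mul_one]
    push_cast; ring
  set p : Fin d → α → ℂ := fun k z => ∑ i, (b i : α → ℂ) z * (B.G b 0)⁻¹ i k with hp
  set q : Fin d → α → ℂ := fun k z => (starRingEnd ℂ) ((b k : α → ℂ) z) with hq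
  have hK : ∀ z w, B.Kf b 0 z w = ∑ k, p k z * q k w := by
    intro z w
    rw [Kf, Finset.sum_comm]
    refine Finset.sum_congr rfl fun k _ => ?_
    rw [hp, Finset.sum_mul]
  have hi0 : ∀ i l, Integrable (fun z => (starRingEnd ℂ) ((b i : α → ℂ) z) * (b l : α → ℂ) z *
      (((Real.exp (-(t * B.v z)) - 1) * B.ρ z : ℝ) : ℂ)) ν := by
    intro i l
    refine ((B.integrable_prod t (b i) (b l)).sub (B.integrable_prod 0 (b i) (b l))).congr
      (Eventually.of_forall fun z => ?_)
    simp only [Pi.sub_apply]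
    rw [hw]; ring
  have hi1 : ∀ i l, ∫ z, (starRingEnd ℂ) ((b i : α → ℂ) z) * (b l : α → ℂ) z *
      (((Real.exp (-(t * B.v z)) - 1) * B.ρ z : ℝ) : ℂ) ∂ν = (B.G b t - B.G b 0) i l := by
    intro i l
    rw [Matrix.sub_apply, G_apply, G_apply, ← integral_sub (B.integrable_prod t (b i) (b l))
      (B.integrable_prod 0 (b i) (b l))]
    congr 1
    funext z
    rw [hw]; ring
  have hfe : ∀ i j, (fun z => q i z * p j z * (((Real.exp (-(t * B.v z)) - 1) * B.ρ z : ℝ) : ℂ)) =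
      fun z => ∑ l, ((starRingEnd ℂ) ((b i : α → ℂ) z) * (b l : α → ℂ) z *
      (((Real.exp (-(t * B.v z)) - 1) * B.ρ z : ℝ) : ℂ)) * (B.G b 0)⁻¹ l j := by
    intro i j
    funext z
    simp only [hp, hq]
    rw [Finset.mul_sum, Finset.sum_mul]
    refine Finset.sum_congr rfl fun k _ => ?_
    ring
  have hint : ∀ i j, Integrable (fun z => q i z * p j z * (((Real.exp (-(t * B.v z)) - 1) * B.ρ z : ℝ) : ℂ)) ν := by
    intro i j
    rw [hfe]
    exact integrable_finsetSum _ fun l _ => (hi0 i l).mul_const _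
  have hmat : (Matrix.of fun i j => ∫ z, q i z * p j z * (((Real.exp (-(t * B.v z)) - 1) * B.ρ z : ℝ) : ℂ) ∂ν)
      = (B.G b t - B.G b 0) * (B.G b 0)⁻¹ := by
    ext i j
    rw [Matrix.of_apply, hfe, integral_finsetSum _ fun l _ => (hi0 i l).mul_const _, Matrix.mul_apply]
    refine Finset.sum_congr rfl fun l _ => ?_
    rw [integral_mul_const, hi1]
  have := andreief ν p q (fun z => (((Real.exp (-(t * B.v z)) - 1) * B.ρ z : ℝ) : ℂ)) hint m
  rw [hmat] at this
  simp only [hK]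
  exact this

lemma Kf_tsum (hb : ∀ t : ℝ, LinearIndependent ℂ (fun i => B.J t (b i))) [SigmaFinite ν] (t : ℝ) :
    ∑' m : ℕ, ((m.factorial : ℝ))⁻¹ • ∫ z, Matrix.det (Matrix.of fun i j : Fin m => B.Kf b 0 (z i) (z j)) *
      ∏ l : Fin m, (((Real.exp (-(t * B.v (z l))) - 1) * B.ρ (z l) : ℝ) : ℂ) ∂(Measure.pi fun _ : Fin m => ν) =
    ((Real.exp (B.lN b t) : ℝ) : ℂ) := by
  simp only [(B.Kf_term b t _).2]
  rw [tsum_minors]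
  have hd : ∀ t, (((B.G b t).det.re : ℝ) : ℂ) = (B.G b t).det := by
    intro t
    apply Complex.ext
    · simp
    · simp [(B.G_det b hb t).2]
  have hne : (B.G b 0).det ≠ 0 := by
    intro h; have := (B.G_det b hb 0).1; rw [h] at this; simp at this
  have h1 : 1 + (B.G b t - B.G b 0) * (B.G b 0)⁻¹ = B.G b t * (B.G b 0)⁻¹ := by
    rw [Matrix.sub_mul, Matrix.mul_nonsing_inv _ (isUnit_iff_ne_zero.2 hne)]; abel
  rw [h1, Matrix.det_mul, Matrix.det_nonsing_inv, Ring.inverse_eq_inv', lN, Real.exp_sub,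
    Real.exp_log (B.G_det b hb t).1, Real.exp_log (B.G_det b hb 0).1]
  push_cast
  rw [hd, hd]
  rfl

end BSetup

namespace BSetup

variable {α : Type*} [MeasurableSpace α] {ν : Measure α} (B : BSetup ν) {d : ℕ} (b : Fin d → B.W)

def P (t : ℝ) : Lp ℂ 2 ν →L[ℂ] Lp ℂ 2 ν :=
  (Submodule.span ℂ (Set.range fun i => B.J t (b i))).starProjection

def IsRep (t : ℝ) (w : α) (x : B.W) : Prop :=
  ∀ f : B.W, inner ℂ (B.J t x) (B.J t f) = (f : α → ℂ) w

lemma Kf_eq (hb : ∀ t : ℝ, LinearIndependent ℂ (fun i => B.J t (b i))) (t : ℝ) (z w : α) (x y : B.W)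
    (hx : B.IsRep t z x) (hy : B.IsRep t w y) :
    B.Kf b t z w = inner ℂ (B.P b t (B.J t x)) (B.P b t (B.J t y)) := by
  rw [P, proj_formula _ (hb t), Kf]
  refine Finset.sum_congr rfl fun i _ => Finset.sum_congr rfl fun j _ => ?_
  rw [hx, ← inner_conj_symm, hy]
  rfl

lemma Kf_diag (hb : ∀ t : ℝ, LinearIndependent ℂ (fun i => B.J t (b i))) (t : ℝ) (w : α) (x : B.W)
    (hx : B.IsRep t w x) :
    (B.Kf b t w w).re = ‖B.P b t (B.J t x)‖ ^ 2 := by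
  rw [B.Kf_eq b hb t w w x x hx hx, inner_self_eq_norm_sq_to_K]
  norm_cast

lemma mem_span (s : ℝ) (y : Lp ℂ 2 ν) (hy : y ∈ Submodule.span ℂ (Set.range fun i => B.J s (b i))) :
    ∃ g : B.W, B.J s g = y ∧ ∀ t, B.J t g ∈ Submodule.span ℂ (Set.range fun i => B.J t (b i)) := by
  have h : ∀ t, (Submodule.span ℂ (Set.range fun i => B.J t (b i))) =
      (Submodule.span ℂ (Set.range b)).map (B.J t) := by
    intro t
    rw [Submodule.map_span, ← Set.range_comp]
    rfl
  rw [h] at hy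
  obtain ⟨g, hg, rfl⟩ := hy
  refine ⟨g, rfl, fun t => ?_⟩
  rw [h]
  exact ⟨g, hg, rfl⟩

lemma R_le (s t : ℝ) (w : α) (x y : B.W)
    (hx : B.IsRep s w x) (hy : B.IsRep t w y) :
    ‖B.P b s (B.J s x)‖ ^ 2 ≤ Real.exp (B.M * |s - t|) * ‖B.P b t (B.J t y)‖ ^ 2 := by
  obtain ⟨g, hg, hgm⟩ := B.mem_span b s (B.P b s (B.J s x)) (Submodule.starProjection_apply_mem _ _)
  set a := ‖B.P b s (B.J s x)‖
  set c := ‖B.P b t (B.J t y)‖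
  have h1 : ((a ^ 2 : ℝ) : ℂ) = (g : α → ℂ) w := by
    have h : inner ℂ (B.P b s (B.J s x)) (B.P b s (B.J s x)) = (g : α → ℂ) w := by
      conv_lhs => rw [P, Submodule.inner_starProjection_left_eq_right]
      rw [← hx g]
      congr 1
      rw [Submodule.starProjection_eq_self_iff.2 (Submodule.starProjection_apply_mem _ _)]
      exact hg.symm
    rw [← h, inner_self_eq_norm_sq_to_K]
    push_cast; rfl
  have h2 : inner ℂ (B.P b t (B.J t y)) (B.J t g) = (g : α → ℂ) w := by
    rw [P, Submodule.inner_starProjection_left_eq_right, Submodule.starProjection_eq_self_iff.2 (hgm t)]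
    exact hy g
  have h3 : a ^ 2 ≤ c * ‖B.J t g‖ := by
    have := norm_inner_le_norm (𝕜 := ℂ) (B.P b t (B.J t y)) (B.J t g)
    rw [h2, ← h1, Complex.norm_real, Real.norm_eq_abs, abs_of_nonneg (sq_nonneg _)] at this
    exact this
  have h4 := B.norm_J_le t s g
  rw [hg, abs_sub_comm] at h4
  change ‖B.J t g‖ ^ 2 ≤ Real.exp (B.M * |s - t|) * a ^ 2 at h4
  have ha : 0 ≤ a := norm_nonneg _
  rcases eq_or_lt_of_le ha with h | h
  · rw [← h]; simp; positivity
  · have h5 : (a ^ 2) ^ 2 ≤ c ^ 2 * (Real.exp (B.M * |s - t|) * a ^ 2) := by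
      calc (a ^ 2) ^ 2 ≤ (c * ‖B.J t g‖) ^ 2 := by gcongr
        _ = c ^ 2 * ‖B.J t g‖ ^ 2 := by ring
        _ ≤ _ := by gcongr
    have h6 : 0 < a ^ 2 := by positivity
    nlinarith

lemma R_le_self (t : ℝ) (x : B.W) : ‖B.P b t (B.J t x)‖ ^ 2 ≤ ‖B.J t x‖ ^ 2 := by
  have : ‖B.P b t (B.J t x)‖ ≤ ‖B.J t x‖ := by
    refine (ContinuousLinearMap.le_opNorm _ _).trans ?_
    have := Submodule.starProjection_norm_le (Submodule.span ℂ (Set.range fun i => B.J t (b i)))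
    exact mul_le_of_le_one_left (norm_nonneg _) this
  gcongr

lemma norm_rep (t : ℝ) (w : α) (x : B.W) (hx : B.IsRep t w x) : ‖B.J t x‖ ^ 2 = ((x : α → ℂ) w).re := by
  rw [← hx x, inner_self_eq_norm_sq_to_K]
  norm_cast

lemma proj_dist (t : ℝ) (x y : Lp ℂ 2 ν) (hy : y ∈ Submodule.span ℂ (Set.range fun i => B.J t (b i))) :
    ‖x - B.P b t x‖ ≤ ‖x - y‖ := by
  rw [P, Submodule.starProjection_minimal]
  exact ciInf_le ⟨0, by rintro _ ⟨i, rfl⟩; exact norm_nonneg _⟩ (⟨y, hy⟩ : Submodule.span ℂ (Set.range fun i => B.J t (b i)))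

lemma exists_seq [SigmaFinite ν] [MeasurableSpace.CountablyGenerated α] :
    ∃ (d : ℕ → ℕ) (b : ∀ N, Fin (d N) → B.W),
      (∀ N t, LinearIndependent ℂ (fun i => B.J t (b N i))) ∧
      ∀ (g : B.W) (t : ℝ), Tendsto (fun N => B.P (b N) t (B.J t g)) atTop (𝓝 (B.J t g)) := by
  obtain ⟨f, hf⟩ := B.exists_dense
  have := fun N : ℕ => B.exists_basis (fun i : Fin N => f i)
  choose d b hb using this
  refine ⟨d, b, fun N t => (hb N t).1, fun g t => ?_⟩
  rw [Metric.tendsto_atTop]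
  intro ε hε
  obtain ⟨i, hi⟩ := hf g t ε hε
  refine ⟨i + 1, fun N hN => ?_⟩
  rw [dist_comm, dist_eq_norm]
  exact lt_of_le_of_lt (B.proj_dist (b N) t _ _ ((hb N t).2 ⟨i, by omega⟩)) hi

lemma Kf_psd (hb : ∀ t : ℝ, LinearIndependent ℂ (fun i => B.J t (b i))) (t : ℝ) {m : ℕ} (z : Fin m → α)
    (x : Fin m → B.W) (hx : ∀ i, B.IsRep t (z i) (x i)) :
    (Matrix.of fun i j : Fin m => B.Kf b t (z i) (z j)).PosSemidef := by
  have : (Matrix.of fun i j : Fin m => B.Kf b t (z i) (z j)) =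
      Matrix.gram ℂ (fun i => B.P b t (B.J t (x i))) := by
    ext i j
    rw [Matrix.of_apply, Matrix.gram_apply]
    exact B.Kf_eq b hb t _ _ _ _ (hx i) (hx j)
  rw [this]
  exact Matrix.posSemidef_gram _ _

end BSetup

namespace BSetup

variable {α : Type*} [MeasurableSpace α] {ν : Measure α} (B : BSetup ν) {d : ℕ} (b : Fin d → B.W)

structure RepData where
  E : Set α
  hE : ∀ᵐ z ∂ν, z ∈ E
  κ : ℝ → α → B.W
  hrep : ∀ t ∈ Set.Icc (0:ℝ) 1, ∀ w ∈ E, B.IsRep t w (κ t w)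
  C : ℝ
  hC : 0 < C
  hCb : ∀ w ∈ E, B.v w ≠ 0 → ((κ 0 w : α → ℂ) w).re ≤ C
  hM : 0 ≤ B.M
  hvρ : Integrable (fun z => |B.v z| * B.ρ z) ν

variable {B} (D : B.RepData)

lemma D_nonneg (hb : ∀ t : ℝ, LinearIndependent ℂ (fun i => B.J t (b i))) {t : ℝ} (ht : t ∈ Set.Icc (0:ℝ) 1)
    {w : α} (hw : w ∈ D.E) : 0 ≤ (B.Kf b t w w).re * B.wt t w := by
  rw [B.Kf_diag b hb t w _ (D.hrep t ht w hw)]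
  exact mul_nonneg (sq_nonneg _) (B.wt_pos t w).le

lemma D_comp (hb : ∀ t : ℝ, LinearIndependent ℂ (fun i => B.J t (b i))) {s t : ℝ}
    (hs : s ∈ Set.Icc (0:ℝ) 1) (ht : t ∈ Set.Icc (0:ℝ) 1)
    {w : α} (hw : w ∈ D.E) : (B.Kf b s w w).re * B.wt s w ≤
      Real.exp (2 * B.M * |s - t|) * ((B.Kf b t w w).re * B.wt t w) := by
  rw [B.Kf_diag b hb t w _ (D.hrep t ht w hw), B.Kf_diag b hb s w _ (D.hrep s hs w hw)]
  have h1 := B.R_le b s t w _ _ (D.hrep s hs w hw) (D.hrep t ht w hw)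
  have h2 := B.wt_le s t w
  calc _ ≤ _ := mul_le_mul h1 h2 (B.wt_pos _ _).le (by positivity)
    _ = _ := by
      have : Real.exp (2 * B.M * |s - t|) = Real.exp (B.M * |s - t|) * Real.exp (B.M * |s - t|) := by
        rw [← Real.exp_add]; congr 1; ring
      rw [this]; ring

lemma Kf0_le (hb : ∀ t : ℝ, LinearIndependent ℂ (fun i => B.J t (b i)))
    {w : α} (hw : w ∈ D.E) (hv : B.v w ≠ 0) : (B.Kf b 0 w w).re ≤ D.C := by
  have h0 : (0:ℝ) ∈ Set.Icc (0:ℝ) 1 := by simp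
  rw [B.Kf_diag b hb 0 w _ (D.hrep 0 h0 w hw)]
  refine (B.R_le_self b 0 _).trans ?_
  rw [B.norm_rep 0 w _ (D.hrep 0 h0 w hw)]
  exact D.hCb w hw hv

lemma D_le (hb : ∀ t : ℝ, LinearIndependent ℂ (fun i => B.J t (b i))) {t : ℝ}
    (ht : t ∈ Set.Icc (0:ℝ) 1)
    {w : α} (hw : w ∈ D.E) : |B.v w| * ((B.Kf b t w w).re * B.wt t w) ≤
      Real.exp (2 * B.M) * D.C * (|B.v w| * B.ρ w) := by
  by_cases hv : B.v w = 0
  · simp [hv]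
  have h0 : (0:ℝ) ∈ Set.Icc (0:ℝ) 1 := by simp
  have h1 := D_comp b D hb ht h0 hw
  have h2 := Kf0_le b D hb hw hv
  have h3 : B.wt 0 w = B.ρ w := by simp [wt]
  rw [h3] at h1
  have hρ := (B.hρ w).le
  have hM := D.hM
  have h4 : Real.exp (2 * B.M * |t - 0|) ≤ Real.exp (2 * B.M) := by
    apply Real.exp_le_exp.2
    rw [sub_zero, abs_of_nonneg ht.1]
    nlinarith [ht.2]
  have h5 : (B.Kf b t w w).re * B.wt t w ≤ Real.exp (2 * B.M) * (D.C * B.ρ w) := by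
    refine h1.trans (mul_le_mul h4 (by gcongr) ?_ (by positivity))
    have := D_nonneg b D hb h0 hw
    rwa [h3] at this
  calc _ ≤ |B.v w| * (Real.exp (2 * B.M) * (D.C * B.ρ w)) := by gcongr
    _ = _ := by ring

lemma D_norm (hb : ∀ t : ℝ, LinearIndependent ℂ (fun i => B.J t (b i))) {t : ℝ}
    (ht : t ∈ Set.Icc (0:ℝ) 1)
    {w : α} (hw : w ∈ D.E) : ‖-((B.Kf b t w w).re * B.v w * B.wt t w)‖ ≤
      Real.exp (2 * B.M) * D.C * (|B.v w| * B.ρ w) := by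
  refine le_trans (le_of_eq ?_) (D_le b D hb ht hw)
  rw [norm_neg, mul_right_comm, norm_mul, Real.norm_eq_abs, Real.norm_eq_abs,
    abs_of_nonneg (D_nonneg b D hb ht hw), mul_comm]

lemma FN_bound (hb : ∀ t : ℝ, LinearIndependent ℂ (fun i => B.J t (b i))) {t : ℝ}
    (ht : t ∈ Set.Icc (0:ℝ) 1) : |B.FN b t| ≤
      Real.exp (2 * B.M) * D.C * ∫ w, |B.v w| * B.ρ w ∂ν := by
  rw [FN, ← Real.norm_eq_abs, ← integral_const_mul]
  refine norm_integral_le_of_norm_le (D.hvρ.const_mul _) ?_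
  filter_upwards [D.hE] with w hw
  exact D_norm b D hb ht hw

lemma D_diff (hb : ∀ t : ℝ, LinearIndependent ℂ (fun i => B.J t (b i))) {s t : ℝ}
    (hs : s ∈ Set.Icc (0:ℝ) 1) (ht : t ∈ Set.Icc (0:ℝ) 1)
    {w : α} (hw : w ∈ D.E) :
    |B.v w| * ((B.Kf b s w w).re * B.wt s w - (B.Kf b t w w).re * B.wt t w) ≤
      (Real.exp (2 * B.M * |s - t|) - 1) * (Real.exp (2 * B.M) * D.C * (|B.v w| * B.ρ w)) := by
  have h1 := D_comp b D hb hs ht hw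
  have h2 := D_le b D hb ht hw
  have h3 : 0 ≤ Real.exp (2 * B.M * |s - t|) - 1 := by
    have := D.hM
    rw [sub_nonneg]; apply Real.one_le_exp; positivity
  calc _ ≤ |B.v w| * ((Real.exp (2 * B.M * |s - t|) - 1) * ((B.Kf b t w w).re * B.wt t w)) := by
        gcongr
        linarith
    _ = (Real.exp (2 * B.M * |s - t|) - 1) * (|B.v w| * ((B.Kf b t w w).re * B.wt t w)) := by ring
    _ ≤ _ := by gcongr

lemma FN_diff (hb : ∀ t : ℝ, LinearIndependent ℂ (fun i => B.J t (b i))) {s t : ℝ}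
    (hs : s ∈ Set.Icc (0:ℝ) 1) (ht : t ∈ Set.Icc (0:ℝ) 1) : |B.FN b s - B.FN b t| ≤
      (Real.exp (2 * B.M * |s - t|) - 1) * (Real.exp (2 * B.M) * D.C * ∫ w, |B.v w| * B.ρ w ∂ν) := by
  rw [FN, FN, ← integral_sub (f := fun w => -((B.Kf b s w w).re * B.v w * B.wt s w))
    (g := fun w => -((B.Kf b t w w).re * B.v w * B.wt t w)) (B.FN_integrable b s).neg (B.FN_integrable b t).neg, ← Real.norm_eq_abs,
    ← integral_const_mul, ← integral_const_mul]
  refine norm_integral_le_of_norm_le ((D.hvρ.const_mul _).const_mul _) ?_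
  filter_upwards [D.hE] with w hw
  have h1 := D_diff b D hb hs ht hw
  have h2 := D_diff b D hb ht hs hw
  rw [abs_sub_comm t s] at h2
  have : -(((B.Kf b s w w).re * B.v w * B.wt s w)) - -((B.Kf b t w w).re * B.v w * B.wt t w) =
    - (B.v w * ((B.Kf b s w w).re * B.wt s w - (B.Kf b t w w).re * B.wt t w)) := by ring
  rw [this, norm_neg, norm_mul, Real.norm_eq_abs, Real.norm_eq_abs]
  rcases abs_cases ((B.Kf b s w w).re * B.wt s w - (B.Kf b t w w).re * B.wt t w) with h | h
  · rw [h.1]; exact h1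
  · rw [h.1, neg_sub]; exact h2

lemma Kf_tendsto {d : ℕ → ℕ} {b : ∀ N, Fin (d N) → B.W}
    (hb : ∀ N t, LinearIndependent ℂ (fun i => B.J t (b N i)))
    (hP : ∀ (g : B.W) (t : ℝ), Tendsto (fun N => B.P (b N) t (B.J t g)) atTop (𝓝 (B.J t g)))
    {t : ℝ} (ht : t ∈ Set.Icc (0:ℝ) 1) {z w : α} (hz : z ∈ D.E) (hw : w ∈ D.E) :
    Tendsto (fun N => B.Kf (b N) t z w) atTop (𝓝 ((D.κ t w : α → ℂ) z)) := by
  have h := (hP (D.κ t z) t).inner (𝕜 := ℂ) (hP (D.κ t w) t)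
  rw [D.hrep t ht z hz (D.κ t w)] at h
  refine h.congr fun N => ?_
  rw [B.Kf_eq (b N) (hb N) t z w _ _ (D.hrep t ht z hz) (D.hrep t ht w hw)]

lemma FN_tendsto {d : ℕ → ℕ} {b : ∀ N, Fin (d N) → B.W}
    (hb : ∀ N t, LinearIndependent ℂ (fun i => B.J t (b N i)))
    (hP : ∀ (g : B.W) (t : ℝ), Tendsto (fun N => B.P (b N) t (B.J t g)) atTop (𝓝 (B.J t g)))
    {t : ℝ} (ht : t ∈ Set.Icc (0:ℝ) 1) :
    Tendsto (fun N => B.FN (b N) t) atTop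
      (𝓝 (∫ w, -(((D.κ t w : α → ℂ) w).re * B.v w * B.wt t w) ∂ν)) := by
  refine tendsto_integral_of_dominated_convergence
    (fun w => Real.exp (2 * B.M) * D.C * (|B.v w| * B.ρ w)) ?_ (D.hvρ.const_mul _) ?_ ?_
  · exact fun N => (B.FN_integrable (b N) t).neg.aestronglyMeasurable
  · intro N
    filter_upwards [D.hE] with w hw
    exact D_norm (b N) D (hb N) ht hw
  · filter_upwards [D.hE] with w hw
    have := (Complex.continuous_re.tendsto _).comp (Kf_tendsto D hb hP ht hw hw)
    exact ((this.mul_const _).mul_const _).neg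

lemma a_bound {t : ℝ} (ht : t ∈ Set.Icc (0:ℝ) 1) (z : α) :
    |(Real.exp (-(t * B.v z)) - 1) * B.ρ z| ≤ Real.exp B.M * (|B.v z| * B.ρ z) := by
  have hρ := B.hρ z
  rw [abs_mul, abs_of_pos hρ, ← mul_assoc]
  gcongr
  have hM : 0 ≤ B.M := B.M_nonneg z
  set y := t * B.v z with hy
  have hyv : |y| ≤ |B.v z| := by
    rw [hy, abs_mul, abs_of_nonneg ht.1]
    exact mul_le_of_le_one_left (abs_nonneg _) ht.2
  have hyM : |y| ≤ B.M := hyv.trans (B.hv z)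
  have h1 : |Real.exp (-y) - 1| ≤ Real.exp B.M * |y| := by
    have e1 := Real.add_one_le_exp (-y)
    have e2 := Real.add_one_le_exp y
    have e3 : Real.exp (-y) * Real.exp y = 1 := by rw [← Real.exp_add]; simp
    have e4 : Real.exp (-y) ≤ Real.exp B.M := Real.exp_le_exp.2 ((neg_le_abs y).trans hyM)
    have e5 : 1 ≤ Real.exp B.M := Real.one_le_exp hM
    have e6 := Real.exp_pos (-y)
    have e7 := le_abs_self y
    have e8 := neg_le_abs y
    have e9 := abs_nonneg y
    rw [abs_le]
    constructor
    · nlinarith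
    · have : Real.exp (-y) - 1 ≤ Real.exp (-y) * (-y) := by nlinarith
      nlinarith
  exact h1.trans (by gcongr)

lemma term_bound (hb : ∀ t : ℝ, LinearIndependent ℂ (fun i => B.J t (b i))) {t : ℝ}
    (ht : t ∈ Set.Icc (0:ℝ) 1) {m : ℕ} (z : Fin m → α) (hz : ∀ i, z i ∈ D.E) :
    ‖Matrix.det (Matrix.of fun i j : Fin m => B.Kf b 0 (z i) (z j)) *
      ∏ l : Fin m, (((Real.exp (-(t * B.v (z l))) - 1) * B.ρ (z l) : ℝ) : ℂ)‖ ≤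
    ∏ l : Fin m, (D.C * (Real.exp B.M * (|B.v (z l)| * B.ρ (z l)))) := by
  have hC := D.hC
  have hnn : 0 ≤ ∏ l : Fin m, (D.C * (Real.exp B.M * (|B.v (z l)| * B.ρ (z l)))) := by
    refine Finset.prod_nonneg fun l _ => ?_
    have := (B.hρ (z l)).le
    positivity
  by_cases hv : ∃ l, B.v (z l) = 0
  · obtain ⟨l, hl⟩ := hv
    rw [Finset.prod_eq_zero (Finset.mem_univ l) (by simp [hl]), mul_zero, norm_zero]
    exact hnn
  · push Not at hv
    have h0 : (0:ℝ) ∈ Set.Icc (0:ℝ) 1 := by simp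
    have h1 := psd_det_bound _ (B.Kf_psd b hb 0 z (fun i => D.κ 0 (z i))
      (fun i => D.hrep 0 h0 _ (hz i))) D.C D.hC (fun i => Kf0_le b D hb (hz i) (hv i))
    rw [norm_mul, norm_prod, Finset.prod_mul_distrib, Finset.prod_const, Finset.card_univ, Fintype.card_fin]
    refine mul_le_mul h1 ?_ (Finset.prod_nonneg fun _ _ => norm_nonneg _) (by positivity)
    refine Finset.prod_le_prod (fun _ _ => norm_nonneg _) fun l _ => ?_
    rw [Complex.norm_real, Real.norm_eq_abs]
    exact a_bound ht (z l)

lemma pi_mem [SigmaFinite ν] (m : ℕ) : ∀ᵐ z ∂(Measure.pi fun _ : Fin m => ν), ∀ i, z i ∈ D.E := by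
  rw [ae_all_iff]
  intro i
  exact (Measure.quasiMeasurePreserving_eval (fun _ : Fin m => ν) i).ae D.hE

lemma bound_integrable [SigmaFinite ν] (m : ℕ) : Integrable (fun z : Fin m → α =>
    ∏ l : Fin m, (D.C * (Real.exp B.M * (|B.v (z l)| * B.ρ (z l))))) (Measure.pi fun _ : Fin m => ν) :=
  Integrable.fintype_prod (f := fun _ x => D.C * (Real.exp B.M * (|B.v x| * B.ρ x)))
    (μ := fun _ : Fin m => ν) fun _ => (D.hvρ.const_mul _).const_mul _

lemma term_norm [SigmaFinite ν] (hb : ∀ t : ℝ, LinearIndependent ℂ (fun i => B.J t (b i))) {t : ℝ}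
    (ht : t ∈ Set.Icc (0:ℝ) 1) (m : ℕ) :
    ‖((m.factorial : ℝ))⁻¹ • ∫ z, Matrix.det (Matrix.of fun i j : Fin m => B.Kf b 0 (z i) (z j)) *
      ∏ l : Fin m, (((Real.exp (-(t * B.v (z l))) - 1) * B.ρ (z l) : ℝ) : ℂ) ∂(Measure.pi fun _ : Fin m => ν)‖ ≤
    (∫ x, D.C * (Real.exp B.M * (|B.v x| * B.ρ x)) ∂ν) ^ m / m.factorial := by
  rw [norm_smul, norm_inv, Real.norm_natCast, div_eq_inv_mul]
  gcongr
  have h := integral_fintype_prod_eq_pow (ι := Fin m) (𝕜 := ℝ) (μ := ν)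
    (fun x => D.C * (Real.exp B.M * (|B.v x| * B.ρ x)))
  rw [Fintype.card_fin] at h
  rw [← h]
  refine norm_integral_le_of_norm_le (bound_integrable D m) ?_
  filter_upwards [pi_mem D m] with z hz
  exact term_bound b D hb ht z hz

lemma term_tendsto [SigmaFinite ν] {d : ℕ → ℕ} {b : ∀ N, Fin (d N) → B.W}
    (hb : ∀ N t, LinearIndependent ℂ (fun i => B.J t (b N i)))
    (hP : ∀ (g : B.W) (t : ℝ), Tendsto (fun N => B.P (b N) t (B.J t g)) atTop (𝓝 (B.J t g)))
    {t : ℝ} (ht : t ∈ Set.Icc (0:ℝ) 1) (m : ℕ) :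
    Tendsto (fun N => ((m.factorial : ℝ))⁻¹ • ∫ z, Matrix.det (Matrix.of fun i j : Fin m =>
        B.Kf (b N) 0 (z i) (z j)) *
      ∏ l : Fin m, (((Real.exp (-(t * B.v (z l))) - 1) * B.ρ (z l) : ℝ) : ℂ) ∂(Measure.pi fun _ : Fin m => ν))
      atTop (𝓝 (((m.factorial : ℝ))⁻¹ • ∫ z, Matrix.det (Matrix.of fun i j : Fin m =>
        (D.κ 0 (z j) : α → ℂ) (z i)) *
      ∏ l : Fin m, (((Real.exp (-(t * B.v (z l))) - 1) * B.ρ (z l) : ℝ) : ℂ) ∂(Measure.pi fun _ : Fin m => ν))) := by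
  apply Tendsto.const_smul
  refine tendsto_integral_of_dominated_convergence _ ?_ (bound_integrable D m) ?_ ?_
  · exact fun N => (B.Kf_term (b N) t m).1.aestronglyMeasurable
  · intro N
    filter_upwards [pi_mem D m] with z hz
    exact term_bound (b N) D (hb N) ht z hz
  · filter_upwards [pi_mem D m] with z hz
    apply Tendsto.mul_const
    simp only [Matrix.det_apply']
    refine tendsto_finsetSum _ fun σ _ => Tendsto.const_mul _ (tendsto_finsetProd _ fun i _ => ?_)
    exact Kf_tendsto D hb hP (by simp) (hz _) (hz _)

theorem abstract_main [SigmaFinite ν] [MeasurableSpace.CountablyGenerated α] (S : ℝ → ℂ)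
    (hS : ∀ t ∈ Set.Icc (0:ℝ) 1, S t = ∑' m : ℕ, ((m.factorial : ℝ))⁻¹ • ∫ z, Matrix.det
        (Matrix.of fun i j : Fin m => (D.κ 0 (z j) : α → ℂ) (z i)) *
      ∏ l : Fin m, (((Real.exp (-(t * B.v (z l))) - 1) * B.ρ (z l) : ℝ) : ℂ) ∂(Measure.pi fun _ : Fin m => ν)) :
    (∀ t ∈ Set.Icc (0:ℝ) 1, (S t).im = 0 ∧ 0 < (S t).re) ∧
    ∀ t ∈ Set.Icc (0:ℝ) 1, HasDerivWithinAt (fun s => Real.log (S s).re)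
      (∫ w, -(((D.κ t w : α → ℂ) w).re * B.v w * B.wt t w) ∂ν) (Set.Icc 0 1) t := by
  obtain ⟨d, b, hb, hP⟩ := B.exists_seq
  have hM := D.hM
  have hCpos := D.hC
  have hI : 0 ≤ ∫ w, |B.v w| * B.ρ w ∂ν := integral_nonneg fun w => by
    have := (B.hρ w).le
    positivity
  refine limit_log (fun N => B.lN (b N)) (fun N => B.FN (b N))
    (fun t => ∫ w, -(((D.κ t w : α → ℂ) w).re * B.v w * B.wt t w) ∂ν) S
    (Real.exp (2 * B.M) * D.C * ∫ w, |B.v w| * B.ρ w ∂ν)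
    (fun h => (Real.exp (2 * B.M * h) - 1) * (Real.exp (2 * B.M) * D.C * ∫ w, |B.v w| * B.ρ w ∂ν))
    ?_ ?_ ?_ ?_ ?_ ?_ ?_ ?_
  · exact fun N t _ => B.lN_deriv (b N) (hb N) t
  · intro N; simp [lN]
  · exact fun N t ht => FN_bound (b N) D (hb N) ht
  · exact fun N s hs t ht => FN_diff (b N) D (hb N) hs ht
  · intro x y hxy
    dsimp only
    gcongr
  · have : Continuous (fun h => (Real.exp (2 * B.M * h) - 1) *
        (Real.exp (2 * B.M) * D.C * ∫ w, |B.v w| * B.ρ w ∂ν)) := by fun_prop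
    have h := this.tendsto 0
    simpa using h
  · exact fun t ht => FN_tendsto D hb hP ht
  · intro t ht
    rw [hS t ht]
    have h := tendsto_tsum_of_dominated_convergence
      (Real.summable_pow_div_factorial (∫ x, D.C * (Real.exp B.M * (|B.v x| * B.ρ x)) ∂ν))
      (fun m => term_tendsto D hb hP ht m)
      (Eventually.of_forall fun N m => term_norm (b N) D (hb N) ht m)
    refine h.congr fun N => ?_
    exact B.Kf_tsum (b N) (hb N) t

end BSetup

lemma weight_eq {n : ℕ} (φ u : (Fin n → ℂ) → ℝ) (k : ℕ) (t : ℝ) (z : Fin n → ℂ) :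
    Real.exp (-(k * (φ z + t * u z))) = Real.exp (-(k * φ z)) * Real.exp (-(t * (k * u z))) := by
  rw [← Real.exp_add]; congr 1; ring

lemma bergman_W_add {n : ℕ} {Ω : Set (Fin n → ℂ)} (hΩo : IsOpen Ω) {ρ : (Fin n → ℂ) → ℝ}
    (hρm : AEMeasurable ρ (volume.restrict Ω)) (hρ : ∀ z, 0 < ρ z) {f g : (Fin n → ℂ) → ℂ}
    (hf : DifferentiableOn ℂ f Ω ∧ Integrable (fun z => ‖f z‖ ^ 2 * ρ z) (volume.restrict Ω))
    (hg : DifferentiableOn ℂ g Ω ∧ Integrable (fun z => ‖g z‖ ^ 2 * ρ z) (volume.restrict Ω)) :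
    DifferentiableOn ℂ (f + g) Ω ∧ Integrable (fun z => ‖(f + g) z‖ ^ 2 * ρ z) (volume.restrict Ω) := by
  refine ⟨hf.1.add hg.1, ?_⟩
  refine ((hf.2.const_mul 2).add (hg.2.const_mul 2)).mono' ?_ (Eventually.of_forall fun z => ?_)
  · exact ((((hf.1.add hg.1).continuousOn.aestronglyMeasurable hΩo.measurableSet).norm).pow 2).mul
      hρm.aestronglyMeasurable
  · have h := (hρ z).le
    rw [Real.norm_eq_abs, abs_of_nonneg (by positivity)]
    simp only [Pi.add_apply]
    have h1 : ‖f z + g z‖ ^ 2 ≤ 2 * ‖f z‖ ^ 2 + 2 * ‖g z‖ ^ 2 := by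
      have := norm_add_le (f z) (g z)
      have h2 : ‖f z + g z‖ ^ 2 ≤ (‖f z‖ + ‖g z‖) ^ 2 := by gcongr
      nlinarith [sq_nonneg (‖f z‖ - ‖g z‖)]
    nlinarith

def bergmanW {n : ℕ} (Ω : Set (Fin n → ℂ)) (hΩo : IsOpen Ω) (ρ : (Fin n → ℂ) → ℝ)
    (hρm : AEMeasurable ρ (volume.restrict Ω)) (hρ : ∀ z, 0 < ρ z) : Submodule ℂ ((Fin n → ℂ) → ℂ) where
  carrier := {f | DifferentiableOn ℂ f Ω ∧ Integrable (fun z => ‖f z‖ ^ 2 * ρ z) (volume.restrict Ω)}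
  add_mem' hf hg := bergman_W_add hΩo hρm hρ hf hg
  zero_mem' := by
    refine ⟨differentiableOn_const 0, ?_⟩
    simp
  smul_mem' c f hf := by
    refine ⟨hf.1.const_smul c, ?_⟩
    refine (hf.2.const_mul (‖c‖ ^ 2)).congr (Eventually.of_forall fun z => ?_)
    simp only [Pi.smul_apply, norm_smul]
    ring

def bergmanSetup {n : ℕ} (Ω : Set (Fin n → ℂ)) (hΩo : IsOpen Ω) (φ : (Fin n → ℂ) → ℝ)
    (hφ : ContinuousOn φ Ω) (u : (Fin n → ℂ) → ℝ) (hu : Continuous u) (k : ℕ) (Mu : ℝ)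
    (hMu : ∀ z, |u z| ≤ Mu) : BSetup (volume.restrict Ω : Measure (Fin n → ℂ)) where
  ρ z := Real.exp (-(k * φ z))
  v z := k * u z
  M := k * Mu
  W := bergmanW Ω hΩo (fun z => Real.exp (-(k * φ z)))
    ((hφ.const_mul (k:ℝ)).neg.rexp.aestronglyMeasurable hΩo.measurableSet).aemeasurable
    (fun _ => Real.exp_pos _)
  hρm := ((hφ.const_mul (k:ℝ)).neg.rexp.aestronglyMeasurable hΩo.measurableSet).aemeasurable
  hρ _ := Real.exp_pos _
  hvm := (hu.measurable).const_mul _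
  hv z := by
    rw [abs_mul, Nat.abs_cast]
    have := hMu z
    gcongr
  hWm f hf := (hf.1).continuousOn.aestronglyMeasurable hΩo.measurableSet
  hWi f hf := hf.2

lemma mem_bergman_iff {n : ℕ} (Ω : Set (Fin n → ℂ)) (hΩo : IsOpen Ω) (ψ : (Fin n → ℂ) → ℝ)
    (hψ : ContinuousOn ψ Ω) (f : (Fin n → ℂ) → ℂ) :
    MemBergman Ω ψ f ↔ DifferentiableOn ℂ f Ω ∧
      Integrable (fun z => ‖f z‖ ^ 2 * Real.exp (-ψ z)) (volume.restrict Ω) := by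
  refine and_congr_right fun hf => ?_
  have hm : AEStronglyMeasurable (fun z => ‖f z‖ ^ 2 * Real.exp (-ψ z)) (volume.restrict Ω) :=
    ((hf.continuousOn.norm.pow 2).mul hψ.neg.rexp).aestronglyMeasurable hΩo.measurableSet
  rw [wnorm2, lt_top_iff_ne_top, lintegral_ofReal_ne_top_iff_integrable hm]
  exact Eventually.of_forall fun z => by positivity


/-- Fix `k` and, for `t ∈ [0,1]`, let `K t` be the reproducing kernel of
`H(k(φ+tu))` and
`S t m = ∫_{Ω^m} det[K 0 (z i, z j)] ∏_l (e^{-k t u(z_l)} - 1) e^{-k φ(z_l)} dλ`.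
Then `S_k(t) = ∑_m S t m / m!` is a positive real number for each `t ∈ [0,1]`, and
`t ↦ log S_k(t)` is differentiable with
`(d/dt) log S_k(t) = -k ∫_Ω K t (w,w) u(w) e^{-k(φ(w)+t u(w))} dλ(w)`. -/
theorem log_fredholm_determinant_derivative
    (Ω : Set (Fin n → ℂ)) (hΩo : IsOpen Ω) (hΩconn : IsConnected Ω)
    (hΩb : Bornology.IsBounded Ω) (hΩp : Pseudoconvex Ω)
    (φ : (Fin n → ℂ) → ℝ) (hφ : SPSHOn Ω φ)
    (u : (Fin n → ℂ) → ℝ) (hu : ContDiff ℝ (⊤ : ℕ∞) u) (huc : HasCompactSupport u)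
    (hus : tsupport u ⊆ Ω) (hadm : SPSHOn Ω (fun z => φ z + u z))
    (k : ℕ)
    (K : ℝ → (Fin n → ℂ) → (Fin n → ℂ) → ℂ)
    (hKmem : ∀ t ∈ Set.Icc (0:ℝ) 1, ∀ w ∈ Ω,
      MemBergman Ω (fun z => k * (φ z + t * u z)) (fun z => K t z w))
    (hKrep : ∀ t ∈ Set.Icc (0:ℝ) 1, ∀ w ∈ Ω, ∀ f,
      MemBergman Ω (fun z => k * (φ z + t * u z)) f →
      wInner Ω (fun z => k * (φ z + t * u z)) f (fun z => K t z w) = f w)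
    (S : ℝ → ℕ → ℂ)
    (hS : ∀ (t : ℝ) (m : ℕ), S t m =
      ∫ z : Fin m → (Fin n → ℂ) in Set.univ.pi fun _ : Fin m => Ω,
        Matrix.det (Matrix.of fun i j : Fin m => K 0 (z i) (z j)) *
          ((∏ l : Fin m, (Real.exp (-(k * (t * u (z l)))) - 1) * Real.exp (-(k * φ (z l)))) : ℝ)) :
    (∀ t ∈ Set.Icc (0:ℝ) 1,
      (∑' m : ℕ, ((m.factorial : ℝ))⁻¹ • S t m).im = 0 ∧
      0 < (∑' m : ℕ, ((m.factorial : ℝ))⁻¹ • S t m).re) ∧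
    ∀ t ∈ Set.Icc (0:ℝ) 1,
      HasDerivWithinAt
        (fun s : ℝ => Real.log (∑' m : ℕ, ((m.factorial : ℝ))⁻¹ • S s m).re)
        (-(k : ℝ) * ∫ w in Ω, (K t w w).re * u w * Real.exp (-(k * (φ w + t * u w))))
        (Set.Icc (0:ℝ) 1) t := by
  
  classical
  have hφc : ContinuousOn φ Ω := hφ.1.continuousOn
  have huC : Continuous u := hu.continuous
  obtain ⟨Mu, hMu⟩ : ∃ Mu, ∀ z, |u z| ≤ Mu := by
    obtain ⟨c, hc⟩ := huC.bounded_above_of_compact_support huc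
    exact ⟨c, hc⟩
  have hMu0 : 0 ≤ Mu := (abs_nonneg _).trans (hMu 0)
  set B := bergmanSetup Ω hΩo φ hφc u huC k Mu hMu with hBdef
  have hwt : ∀ t z, B.wt t z = Real.exp (-(k * (φ z + t * u z))) := fun t z => (weight_eq φ u k t z).symm
  have hψc : ∀ t : ℝ, ContinuousOn (fun z => (k:ℝ) * (φ z + t * u z)) Ω := fun t =>
    continuousOn_const.mul (hφc.add (continuousOn_const.mul huC.continuousOn))
  have hmem : ∀ (t : ℝ) f, MemBergman Ω (fun z => k * (φ z + t * u z)) f ↔ f ∈ B.W := by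
    intro t f
    rw [mem_bergman_iff Ω hΩo _ (hψc t)]
    constructor
    · rintro ⟨h1, h2⟩
      refine ⟨h1, (h2.const_mul (Real.exp (B.M * |0 - t|))).mono' ?_ (Eventually.of_forall fun z => ?_)⟩
      · exact ((h1.continuousOn.norm.pow 2).aestronglyMeasurable hΩo.measurableSet).mul
          B.hρm.aestronglyMeasurable
      · have h3 := B.wt_le 0 t z
        have h4 : B.wt 0 z = Real.exp (-(k * φ z)) := by rw [hwt]; simp
        rw [h4, hwt] at h3
        rw [Real.norm_eq_abs, abs_of_nonneg (by positivity)]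
        calc _ ≤ ‖f z‖ ^ 2 * _ := mul_le_mul_of_nonneg_left h3 (by positivity)
          _ = _ := by ring
    · intro h
      refine ⟨h.1, ?_⟩
      have := B.sq_integrable ⟨f, h⟩ t
      simpa only [hwt] using this
  set κ : ℝ → (Fin n → ℂ) → B.W := fun t w =>
    if h : t ∈ Set.Icc (0:ℝ) 1 ∧ w ∈ Ω then
      ⟨fun z => K t z w, (hmem t _).1 (hKmem t h.1 w h.2)⟩ else 0 with hκ
  have hκe : ∀ t ∈ Set.Icc (0:ℝ) 1, ∀ w ∈ Ω, (κ t w : (Fin n → ℂ) → ℂ) = fun z => K t z w := by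
    intro t ht w hw
    simp only [hκ]
    rw [dif_pos ⟨ht, hw⟩]
  have hrep : ∀ t ∈ Set.Icc (0:ℝ) 1, ∀ w ∈ Ω, B.IsRep t w (κ t w) := by
    intro t ht w hw f
    rw [B.inner_J, hκe t ht w hw, ← hKrep t ht w hw f ((hmem t f).2 f.2), wInner]
    congr 1
    funext z
    rw [hwt]
    ring
  have hψ0 : ContinuousOn (fun z => (k:ℝ) * (φ z + 0 * u z)) Ω := hψc 0
  obtain ⟨C, hC, hCb⟩ := bergman_ineq Ω hΩo _ hψ0 (tsupport u) huc hus
  have h01 : (0:ℝ) ∈ Set.Icc (0:ℝ) 1 := by simp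
  have hCb' : ∀ w ∈ Ω, B.v w ≠ 0 → ((κ 0 w : (Fin n → ℂ) → ℂ) w).re ≤ C := by
    intro w hw hv
    have hwL : w ∈ tsupport u := by
      apply subset_tsupport
      intro h
      apply hv
      change (k:ℝ) * u w = 0
      rw [h, mul_zero]
    have h1 := hCb (κ 0 w) ((hmem 0 _).2 (κ 0 w).2).1 w hwL
    have h2 := B.norm_rep 0 w _ (hrep 0 h01 w hw)
    have h3 := B.norm_J 0 (κ 0 w)
    simp only [hwt] at h3
    have hi := B.sq_integrable (κ 0 w) 0
    simp only [hwt] at hi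
    rw [← ofReal_integral_eq_lintegral_ofReal hi (Eventually.of_forall fun z => by positivity), ← h3, h2,
      ← ENNReal.ofReal_mul hC.le] at h1
    have hnn : 0 ≤ ((κ 0 w : (Fin n → ℂ) → ℂ) w).re := by rw [← h2]; positivity
    rw [ENNReal.ofReal_le_ofReal_iff (by positivity)] at h1
    have h5 : ((κ 0 w : (Fin n → ℂ) → ℂ) w).re ≤ ‖(κ 0 w : (Fin n → ℂ) → ℂ) w‖ := Complex.re_le_norm _
    by_contra hlt
    push Not at hlt
    nlinarith
  have hvρ : Integrable (fun z => |B.v z| * B.ρ z) (volume.restrict Ω) := by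
    have hc : ContinuousOn (fun z => |(k:ℝ) * u z| * Real.exp (-(k * φ z))) (tsupport u) :=
      ((continuousOn_const.mul huC.continuousOn).abs).mul
        (((hφc.mono hus).const_mul (k:ℝ)).neg.rexp)
    have h1 : IntegrableOn (fun z => |(k:ℝ) * u z| * Real.exp (-(k * φ z))) (tsupport u) volume :=
      hc.integrableOn_compact huc
    rw [integrableOn_iff_integrable_of_support_subset] at h1
    · exact h1.restrict
    · intro z hz
      apply subset_tsupport
      intro h
      apply hz
      simp [h]
  let D : B.RepData :=
    { E := Ω
      hE := ae_restrict_mem hΩo.measurableSet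
      κ := κ
      hrep := hrep
      C := C
      hC := hC
      hCb := hCb'
      hM := mul_nonneg (Nat.cast_nonneg k) hMu0
      hvρ := hvρ }
  have hmain := BSetup.abstract_main D (fun t => ∑' m : ℕ, ((m.factorial : ℝ))⁻¹ • S t m) (by
    intro t ht
    refine tsum_congr fun m => ?_
    congr 1
    rw [hS, volume_pi, Measure.restrict_pi_pi]
    refine integral_congr_ae ?_
    filter_upwards [BSetup.pi_mem D m] with z hz
    have e1 : ∀ i j, (D.κ 0 (z j) : (Fin n → ℂ) → ℂ) (z i) = K 0 (z i) (z j) := fun i j =>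
      congrFun (hκe 0 h01 (z j) (hz j)) (z i)
    simp only [e1]
    congr 1
    rw [Complex.ofReal_prod]
    refine Finset.prod_congr rfl fun l _ => ?_
    congr 3
    change Real.exp _ = Real.exp (-(t * (k * u (z l))))
    congr 1
    ring)
  refine ⟨hmain.1, fun t ht => (hmain.2 t ht).congr_deriv ?_⟩
  rw [← integral_const_mul]
  refine setIntegral_congr_fun hΩo.measurableSet fun w hw => ?_
  have e1 : (D.κ t w : (Fin n → ℂ) → ℂ) w = K t w w := congrFun (hκe t ht w hw) w
  simp only [e1, hwt]
  change -((K t w w).re * (k * u w) * _) = _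
  ring
end
end
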